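/- arXiv:1910.06388 — 2 statements merged into one kernel-verified Lean document; each statement's English description precedes it below -/
import Mathlib

section
/- There exist absolute constants c > 0 and C > 0 with the following property. For every fundamental discriminant D with |D| ≥ 16, every real Y with 3 ≤ Y ≤ |D|, and every real k ≥ 1, letting V be the set of quadratic Dirichlet characters χ modulo |D| having no real zero β of L(s,χ) with β > 1 − c/log |D|, the number of χ ∈ V satisfying L(1,χ) ≥ (log |D|)^{−kC·√((log(ω_Y(D)+2) + log log Y)/log log |D| + 2^{−ω_Y(D)})} is at least (1 − 1/k²)·#V. -/
open Filter Topology NumberField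

noncomputable section

/-- A fundamental discriminant: an integer `D ≠ 1` that is either squarefree and `≡ 1 (mod 4)`,
or `4m` with `m` squarefree and `m ≡ 2, 3 (mod 4)`. -/
def IsFundDiscr (D : ℤ) : Prop :=
  D ≠ 1 ∧ ((Squarefree D ∧ D % 4 = 1) ∨
    ∃ m : ℤ, D = 4 * m ∧ Squarefree m ∧ (m % 4 = 2 ∨ m % 4 = 3))

/-- The number of fundamental discriminants `D` with `|D| ≤ X` satisfying `P`. -/
def fdCount (P : ℤ → Prop) (X : ℝ) : ℕ :=
  Nat.card {D : ℤ // IsFundDiscr D ∧ |(D : ℝ)| ≤ X ∧ P D}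

/-- The property `P` holds for 100% of fundamental discriminants. -/
def FdDensityOne (P : ℤ → Prop) : Prop :=
  Tendsto (fun X : ℝ => (fdCount P X : ℝ) / (fdCount (fun _ => True) X : ℝ)) atTop (𝓝 1)

/-- `ω_Y(D)`: the number of primes `p ≤ Y` dividing `D`. -/
def omegaY (Y : ℝ) (D : ℤ) : ℕ :=
  Nat.card {p : ℕ // p.Prime ∧ (p : ℝ) ≤ Y ∧ (p : ℤ) ∣ D}

namespace S8

/-! ### Part A: a polynomial bound for `L(s, χ)` to the left of `1` -/

lemma charSum_range_level {N : ℕ} [NeZero N] {χ : DirichletCharacter ℂ N} (hχ : χ ≠ 1) :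
    ∑ k ∈ Finset.range N, χ (k : ZMod N) = 0 := by
  rw [← MulChar.sum_eq_zero_of_ne_one hχ]
  refine Finset.sum_nbij' (fun k => (k : ZMod N)) (fun a => a.val) ?_ ?_ ?_ ?_ ?_
  · simp
  · intro a _
    simpa using ZMod.val_lt a
  · intro a ha
    simpa using ZMod.val_cast_of_lt (by simpa using ha)
  · intro a _
    simp
  · intro a _
    rfl

lemma charSum_bound {N : ℕ} [NeZero N] {χ : DirichletCharacter ℂ N} (hχ : χ ≠ 1) (n : ℕ) :
    ‖∑ k ∈ Finset.range n, χ (k : ZMod N)‖ ≤ N := by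
  have h0 : ∀ m r : ℕ, ∑ k ∈ Finset.range (N * m + r), χ (k : ZMod N)
      = ∑ k ∈ Finset.range r, χ (k : ZMod N) := by
    intro m
    induction m with
    | zero => intro r; simp
    | succ m ih =>
      intro r
      have : N * (m + 1) + r = N * m + (N + r) := by ring
      rw [this, ih, Finset.sum_range_add, charSum_range_level hχ, zero_add]
      refine Finset.sum_congr rfl fun i _ => ?_
      simp
  have h1 := h0 (n / N) (n % N)
  rw [Nat.div_add_mod] at h1
  rw [h1]
  refine (norm_sum_le _ _).trans ?_
  refine (Finset.sum_le_sum fun i _ => χ.norm_le_one _).trans ?_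
  simp only [Finset.sum_const, Finset.card_range, nsmul_eq_mul, mul_one, Nat.cast_le]
  exact (Nat.mod_lt _ (NeZero.pos N)).le

lemma charSum_bound' {N : ℕ} [NeZero N] {χ : DirichletCharacter ℂ N} (hχ : χ ≠ 1) (n : ℕ) :
    ‖∑ k ∈ Finset.range n, χ ((k + 1 : ℕ) : ZMod N)‖ ≤ 2 * N := by
  have h := Finset.sum_range_succ' (fun k : ℕ => χ (k : ZMod N)) n
  have h2 : ∑ k ∈ Finset.range n, χ ((k + 1 : ℕ) : ZMod N) =
      ∑ k ∈ Finset.range (n + 1), χ (k : ZMod N) - χ ((0 : ℕ) : ZMod N) := by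
    rw [h]; ring
  rw [h2]
  refine (norm_sub_le _ _).trans ?_
  have h3 := charSum_bound hχ (n + 1)
  have h4 := χ.norm_le_one ((0 : ℕ) : ZMod N)
  have h5 : (1 : ℝ) ≤ N := by exact_mod_cast NeZero.one_le
  linarith

lemma cpow_diff_bound (s : ℂ) (hs : 0 < s.re) (i : ℕ) :
    ‖((i + 1 : ℕ) : ℂ) ^ (-s) - ((i + 2 : ℕ) : ℂ) ^ (-s)‖ ≤
      ‖s‖ * ((i : ℝ) + 1) ^ (-s.re - 1) := by
  have hs0 : s ≠ 0 := by rintro rfl; simp at hs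
  have h := Convex.norm_image_sub_le_of_norm_hasDerivWithin_le (𝕜 := ℝ)
    (f := fun x : ℝ => (x : ℂ) ^ (-s)) (f' := fun x : ℝ => -s * (x : ℂ) ^ (-s - 1))
    (s := Set.Icc ((i : ℝ) + 1) ((i : ℝ) + 2)) (x := (i : ℝ) + 2) (y := (i : ℝ) + 1)
    (C := ‖s‖ * ((i : ℝ) + 1) ^ (-s.re - 1)) ?_ ?_ (convex_Icc _ _) ?_ ?_
  · simp only [add_sub_add_left_eq_sub] at h
    have e1 : ‖(1 : ℝ) - 2‖ = 1 := by norm_num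
    rw [e1, mul_one] at h
    push_cast at h ⊢
    exact h
  · intro x hx
    have hx0 : x ≠ 0 := by
      have := hx.1
      have : (0 : ℝ) ≤ i := Nat.cast_nonneg i
      intro h; linarith
    have := hasDerivAt_ofReal_cpow_const' (x := x) hx0 (r := -s - 1) (by
      intro h
      apply hs0
      linear_combination -h)
    have h2 := (this.const_mul (-s)).hasDerivWithinAt (s := Set.Icc ((i : ℝ) + 1) ((i : ℝ) + 2))
    convert h2 using 1
    funext y
    simp only [sub_add_cancel]
    field_simp
  · intro x hx
    have hi : (0 : ℝ) ≤ i := Nat.cast_nonneg i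
    have hx0 : 0 < x := by linarith [hx.1]
    rw [norm_mul, norm_neg, Complex.norm_cpow_eq_rpow_re_of_pos hx0]
    simp only [Complex.sub_re, Complex.neg_re, Complex.one_re]
    gcongr ‖s‖ * ?_
    exact Real.rpow_le_rpow_of_nonpos (by linarith) hx.1 (by linarith)
  · constructor <;> linarith
  · constructor <;> linarith

/-- The domain on which we bound `L`. -/
def dom : Set ℂ := {s : ℂ | (1 / 2 : ℝ) < s.re} ∩ Metric.ball 0 4

lemma dom_open : IsOpen dom :=
  (isOpen_lt continuous_const Complex.continuous_re).inter Metric.isOpen_ball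

lemma dom_preconn : IsPreconnected dom :=
  ((convex_halfSpace_re_gt _).inter (convex_ball _ _)).isPreconnected

def LT {N : ℕ} (χ : DirichletCharacter ℂ N) (i : ℕ) (s : ℂ) : ℂ :=
  (((i + 1 : ℕ) : ℂ) ^ (-s) - ((i + 2 : ℕ) : ℂ) ^ (-s)) *
    ∑ k ∈ Finset.range (i + 1), χ ((k + 1 : ℕ) : ZMod N)

lemma LT_bound {N : ℕ} [NeZero N] {χ : DirichletCharacter ℂ N} (hχ : χ ≠ 1) (i : ℕ) (s : ℂ)
    (hs : s ∈ dom) : ‖LT χ i s‖ ≤ 8 * N * ((i : ℝ) + 1) ^ (-(3 / 2) : ℝ) := by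
  obtain ⟨h1, h2⟩ := hs
  simp only [Set.mem_ofPred_eq] at h1
  have h3 : ‖s‖ < 4 := by simpa using h2
  rw [LT, norm_mul]
  have a := cpow_diff_bound s (by linarith) i
  have b := charSum_bound' hχ (i + 1)
  have hi : (0 : ℝ) ≤ i := Nat.cast_nonneg i
  have c : ((i : ℝ) + 1) ^ (-s.re - 1) ≤ ((i : ℝ) + 1) ^ (-(3 / 2) : ℝ) :=
    Real.rpow_le_rpow_of_exponent_le (by linarith) (by linarith)
  calc _ ≤ (‖s‖ * ((i : ℝ) + 1) ^ (-s.re - 1)) * (2 * N) :=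
        mul_le_mul a b (norm_nonneg _) (by positivity)
    _ ≤ (4 * ((i : ℝ) + 1) ^ (-(3 / 2) : ℝ)) * (2 * N) := by gcongr
    _ = _ := by ring

lemma summable_Z : Summable fun i : ℕ => ((i : ℝ) + 1) ^ (-(3 / 2) : ℝ) := by
  have := (Real.summable_nat_rpow (p := (-(3 / 2) : ℝ))).mpr (by norm_num)
  have := (summable_nat_add_iff 1).mpr this
  simpa using this

lemma LT_diff {N : ℕ} [NeZero N] {χ : DirichletCharacter ℂ N} (hχ : χ ≠ 1) :
    DifferentiableOn ℂ (fun s => ∑' i, LT χ i s) dom := by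
  refine Complex.differentiableOn_tsum_of_summable_norm (summable_Z.mul_left (8 * N : ℝ)) ?_
    dom_open (fun i w hw => LT_bound hχ i w hw)
  intro i
  unfold LT
  have e1 : ((i + 1 : ℕ) : ℂ) ≠ 0 := Nat.cast_ne_zero.mpr (by omega)
  have e2 : ((i + 2 : ℕ) : ℂ) ≠ 0 := Nat.cast_ne_zero.mpr (by omega)
  have d1 : Differentiable ℂ fun s : ℂ => ((i + 1 : ℕ) : ℂ) ^ (-s) := by
    intro s
    exact (differentiable_neg s).const_cpow (Or.inl e1)
  have d2 : Differentiable ℂ fun s : ℂ => ((i + 2 : ℕ) : ℂ) ^ (-s) := by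
    intro s
    exact (differentiable_neg s).const_cpow (Or.inl e2)
  exact ((d1.sub d2).mul_const _).differentiableOn

lemma LT_eq {N : ℕ} [NeZero N] {χ : DirichletCharacter ℂ N} (hχ : χ ≠ 1) {s : ℂ} (hs : s ∈ dom)
    (hs1 : 1 < s.re) : χ.LFunction s = ∑' i, LT χ i s := by
  have hsum : Summable fun i => LT χ i s :=
    Summable.of_norm_bounded (summable_Z.mul_left (8 * N : ℝ)) (fun i => LT_bound hχ i s hs)
  have t1 := hsum.hasSum.tendsto_sum_nat
  have t2 : HasSum (LSeries.term (fun n => χ (n : ZMod N)) s) (χ.LFunction s) := by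
    rw [DirichletCharacter.LFunction_eq_LSeries χ hs1]
    exact (ZMod.LSeriesSummable_of_one_lt_re χ hs1).hasSum
  have t3 : HasSum (fun n : ℕ => ((n + 1 : ℕ) : ℂ) ^ (-s) * χ ((n + 1 : ℕ) : ZMod N))
      (χ.LFunction s) := by
    have := (hasSum_nat_add_iff' 1).mpr t2
    simp only [Finset.range_one, Finset.sum_singleton, LSeries.term_zero, sub_zero] at this
    have e : (fun n : ℕ => ((n + 1 : ℕ) : ℂ) ^ (-s) * χ ((n + 1 : ℕ) : ZMod N)) =
        fun n => LSeries.term (fun n => χ (n : ZMod N)) s (n + 1) := by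
      funext n
      rw [LSeries.term_of_ne_zero (by omega), Complex.cpow_neg]
      field_simp
    rw [e]
    exact this
  have t4 := (tendsto_add_atTop_iff_nat 1).mpr t3.tendsto_sum_nat
  have key : ∀ n : ℕ, ∑ i ∈ Finset.range (n + 1),
      ((i + 1 : ℕ) : ℂ) ^ (-s) * χ ((i + 1 : ℕ) : ZMod N) =
      ((n + 1 : ℕ) : ℂ) ^ (-s) * ∑ k ∈ Finset.range (n + 1), χ ((k + 1 : ℕ) : ZMod N) +
      ∑ i ∈ Finset.range n, LT χ i s := by
    intro n
    have := Finset.sum_range_by_parts (fun i : ℕ => ((i + 1 : ℕ) : ℂ) ^ (-s))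
      (fun i : ℕ => χ ((i + 1 : ℕ) : ZMod N)) (n + 1)
    simp only [smul_eq_mul, Nat.add_sub_cancel] at this
    rw [this, sub_eq_add_neg, ← Finset.sum_neg_distrib]
    congr 1
    refine Finset.sum_congr rfl fun i _ => ?_
    unfold LT
    ring
  have t5 : Tendsto (fun n : ℕ => ((n + 1 : ℕ) : ℂ) ^ (-s) *
      ∑ k ∈ Finset.range (n + 1), χ ((k + 1 : ℕ) : ZMod N)) atTop (𝓝 0) := by
    have z : Tendsto (fun n : ℕ => ((n + 1 : ℕ) : ℝ) ^ (-s.re) * (2 * N)) atTop (𝓝 0) := by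
      have := (tendsto_rpow_neg_atTop (y := s.re) (by linarith)).comp
        (tendsto_natCast_atTop_atTop (R := ℝ))
      have := ((tendsto_add_atTop_iff_nat 1).mpr this).mul_const (2 * N : ℝ)
      simpa using this
    refine squeeze_zero_norm (fun n => ?_) z
    rw [norm_mul]
    gcongr
    · rw [← Complex.ofReal_natCast, Complex.norm_cpow_eq_rpow_re_of_pos (by positivity)]
      simp
    · exact charSum_bound' hχ _
  have t6 := (t5.add t1)
  rw [zero_add] at t6
  refine tendsto_nhds_unique t4 (t6.congr fun n => (key n).symm)

lemma LFunction_bound : ∃ C : ℝ, 0 < C ∧ ∀ (N : ℕ) [NeZero N] (χ : DirichletCharacter ℂ N),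
    χ ≠ 1 → ∀ s ∈ dom, ‖χ.LFunction s‖ ≤ C * N := by
  refine ⟨8 * (∑' i : ℕ, ((i : ℝ) + 1) ^ (-(3 / 2) : ℝ)) + 1, ?_, ?_⟩
  · have : 0 ≤ ∑' i : ℕ, ((i : ℝ) + 1) ^ (-(3 / 2) : ℝ) := tsum_nonneg fun i => by positivity
    linarith
  intro N _ χ hχ s hs
  have h2 : (2 : ℂ) ∈ dom := by
    constructor
    · simp; norm_num
    · simp; norm_num
  have heq : Set.EqOn χ.LFunction (fun s => ∑' i, LT χ i s) dom := by
    refine AnalyticOnNhd.eqOn_of_preconnected_of_eventuallyEq (z₀ := (2 : ℂ))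
      ((DirichletCharacter.differentiable_LFunction hχ).differentiableOn.analyticOnNhd dom_open)
      ((LT_diff hχ).analyticOnNhd dom_open) dom_preconn h2 ?_
    have o : IsOpen {s : ℂ | (1 : ℝ) < s.re} := isOpen_lt continuous_const Complex.continuous_re
    filter_upwards [dom_open.mem_nhds h2, o.mem_nhds (by simp : (2 : ℂ) ∈ _)] with w h1 h3
    exact LT_eq hχ h1 h3
  rw [heq hs]
  have := tsum_of_norm_bounded ((summable_Z.mul_left (8 * N : ℝ)).hasSum)
    (fun i => LT_bound hχ i s hs)
  rw [tsum_mul_left] at this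
  have hN : (0 : ℝ) ≤ N := Nat.cast_nonneg N
  calc _ ≤ _ := this
    _ ≤ _ := by nlinarith

/-! ### Part B: Taylor expansion of `ζ(s) L(s, χ)` around `2` -/

open scoped ComplexOrder in
lemma zetaMul_ge_one {N : ℕ} [NeZero N] {χ : DirichletCharacter ℂ N} (hχ : χ ^ 2 = 1) {σ : ℝ}
    (hσ : 1 < σ) : 1 ≤ (LSeries χ.zetaMul σ).re := by
  have hs := (DirichletCharacter.LSeriesSummable_zetaMul χ (s := (σ : ℂ)) (by simpa using hσ)).hasSum
  have h2 := Complex.hasSum_re hs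
  have h3 := le_hasSum h2 1 (fun j _ => ?_)
  · have e : LSeries.term χ.zetaMul σ 1 = 1 := by
      rw [LSeries.term_of_ne_zero one_ne_zero, χ.isMultiplicative_zetaMul.1]
      simp
    rw [e, Complex.one_re] at h3
    exact h3
  · have : 0 ≤ LSeries.term χ.zetaMul σ j := by
      rw [LSeries.term_def]
      split
      · exact le_rfl
      · exact mul_nonneg (DirichletCharacter.zetaMul_nonneg hχ j)
          (Complex.inv_natCast_cpow_ofReal_pos (by assumption) σ).le
    exact (Complex.nonneg_iff.mp this).1

open ArithmeticFunction in
lemma zeta_mul_L {N : ℕ} [NeZero N] (χ : DirichletCharacter ℂ N) {s : ℂ} (hs : 1 < s.re) :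
    riemannZeta s * χ.LFunction s = LSeries χ.zetaMul s := by
  rw [DirichletCharacter.zetaMul, ← coe_mul, LSeries_convolution']
  · rw [χ.LFunction_eq_LSeries hs]
    congr 1
    · simp_rw [← LSeries_zeta_eq_riemannZeta hs, ← natCoe_apply]
    · exact LSeries_congr χ.apply_eq_toArithmeticFunction_apply s
  · exact LSeriesSummable_zeta_iff.mpr hs
  · exact (LSeriesSummable_congr _ fun h ↦ (χ.apply_eq_toArithmeticFunction_apply h).symm).mpr <|
      ZMod.LSeriesSummable_of_one_lt_re χ hs

/-- The entire function `ζ(s)L(s,χ) - L(1,χ)/(s-1)`. -/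
def gfun {N : ℕ} [NeZero N] (χ : DirichletCharacter ℂ N) (s : ℂ) : ℂ :=
  riemannZeta₀ s * χ.LFunction s + dslope χ.LFunction 1 s

lemma gfun_eq {N : ℕ} [NeZero N] (χ : DirichletCharacter ℂ N) {s : ℂ} (hs : s ≠ 1) :
    gfun χ s = riemannZeta s * χ.LFunction s - χ.LFunction 1 * (1 * s - 1)⁻¹ := by
  rw [gfun, dslope_of_ne _ hs, slope_def_field, riemannZeta_eq_inv_sub_add hs]
  have : s - 1 ≠ 0 := sub_ne_zero.mpr hs
  field_simp
  ring

lemma gfun_diff {N : ℕ} [NeZero N] {χ : DirichletCharacter ℂ N} (hχ : χ ≠ 1) :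
    Differentiable ℂ (gfun χ) := by
  have hL := DirichletCharacter.differentiable_LFunction hχ
  have : Differentiable ℂ (dslope χ.LFunction 1) := by
    rw [← differentiableOn_univ] at hL ⊢
    exact (Complex.differentiableOn_dslope univ_mem).mpr hL
  exact (differentiable_riemannZeta₀.mul hL).add this

lemma gfun_bound : ∃ C : ℝ, 0 < C ∧ ∀ (N : ℕ) [NeZero N] (χ : DirichletCharacter ℂ N),
    χ ≠ 1 → ∀ s ∈ Metric.sphere (2 : ℂ) (4 / 3), ‖gfun χ s‖ ≤ C * N := by
  obtain ⟨C, hC, h⟩ := LFunction_bound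
  obtain ⟨Z, hZ⟩ := (isCompact_sphere (2 : ℂ) (4 / 3)).exists_bound_of_continuousOn
    (f := riemannZeta₀) differentiable_riemannZeta₀.continuous.continuousOn
  refine ⟨|Z| * C + 6 * C, by positivity, ?_⟩
  intro N _ χ hχ s hs
  have hs' : ‖s - 2‖ = 4 / 3 := by simpa using hs
  have hsd : s ∈ dom := by
    constructor
    · have := Complex.abs_re_le_norm (s - 2)
      rw [hs'] at this
      have := (abs_le.mp this).1
      simp at this ⊢
      linarith
    · have : ‖s‖ ≤ ‖s - 2‖ + ‖(2 : ℂ)‖ := by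
        simpa using norm_add_le (s - 2) 2
      simp at this ⊢
      linarith
  have h1d : (1 : ℂ) ∈ dom := by
    constructor <;> simp <;> norm_num
  have hs1 : s ≠ 1 := by
    rintro rfl
    norm_num at hs'
  have hs1' : 1 / 3 ≤ ‖s - 1‖ := by
    have := norm_sub_norm_le (s - 2) (-1)
    simp only [norm_neg, norm_one, hs'] at this
    have e : s - 2 - -1 = s - 1 := by ring
    rw [e] at this
    linarith
  have hN : (0 : ℝ) ≤ N := Nat.cast_nonneg N
  rw [gfun, dslope_of_ne _ hs1, slope_def_field]
  have a1 := h N χ hχ s hsd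
  have a2 := h N χ hχ 1 h1d
  have a3 := hZ s hs
  calc _ ≤ ‖riemannZeta₀ s * χ.LFunction s‖ + ‖(χ.LFunction s - χ.LFunction 1) / (s - 1)‖ :=
        norm_add_le _ _
    _ ≤ |Z| * (C * N) + (2 * (C * N)) / (1 / 3) := by
        rw [norm_mul, norm_div]
        gcongr
        · exact a3.trans (le_abs_self Z)
        · exact (norm_sub_le _ _).trans (by linarith)
    _ = _ := by ring

open scoped ComplexOrder in
theorem taylor : ∃ C : ℝ, 0 < C ∧ ∀ (N : ℕ) [NeZero N] (χ : DirichletCharacter ℂ N),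
    χ ^ 2 = 1 → χ ≠ 1 → ∃ (b : ℕ → ℝ) (lam : ℝ) (f : ℝ → ℝ), χ.LFunction 1 = lam ∧
      (∀ m, 0 ≤ b m) ∧ 1 ≤ b 0 ∧ (∀ m, |b m - lam| ≤ C * N * (3 / 4) ^ m) ∧
      (∀ s : ℝ, 1 < s → 1 ≤ f s) ∧
      ∀ s : ℝ, s ≠ 1 → riemannZeta s * χ.LFunction s = f s ∧
        HasSum (fun m => (b m - lam) * (2 - s) ^ m) (f s - lam / (s - 1)) := by
  obtain ⟨C, hC, hb⟩ := gfun_bound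
  refine ⟨C, hC, ?_⟩
  intro N _ χ hχ2 hχ
  have habs : LSeries.abscissaOfAbsConv χ.zetaMul < (2 : ℝ) := by
    refine lt_of_le_of_lt (LSeries.abscissaOfAbsConv_le_of_forall_lt_LSeriesSummable (x := 1)
      fun y hy => DirichletCharacter.LSeriesSummable_zetaMul χ (by simpa using hy)) ?_
    norm_num
    exact_mod_cast (by norm_num : (1 : ℝ) < 2)
  have hpos := fun m => LSeries.iteratedDeriv_alternating (a := χ.zetaMul)
    (fun n => DirichletCharacter.zetaMul_nonneg hχ2 n) habs m
  set Dm : ℕ → ℂ := fun m => (-1) ^ m * iteratedDeriv m (LSeries χ.zetaMul) ((2 : ℝ) : ℂ) with hDm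
  have hDre : ∀ m, Dm m = ((Dm m).re : ℂ) := fun m => by
    have := (Complex.nonneg_iff.mp (hpos m)).2
    apply Complex.ext
    · exact (Complex.ofReal_re _).symm
    · rw [Complex.ofReal_im]
      exact this.symm
  have hder : ∀ m, iteratedDeriv m (gfun χ) 2 =
      iteratedDeriv m (LSeries χ.zetaMul) ((2 : ℝ) : ℂ) - χ.LFunction 1 * ((-1) ^ m * m.factorial) := by
    intro m
    have o : IsOpen {s : ℂ | (1 : ℝ) < s.re} := isOpen_lt continuous_const Complex.continuous_re
    have e : gfun χ =ᶠ[𝓝 2] (LSeries χ.zetaMul -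
        fun s : ℂ => χ.LFunction 1 * (1 * s - 1)⁻¹) := by
      filter_upwards [o.mem_nhds (by simp : (2 : ℂ) ∈ _)] with s hs
      have hs : 1 < s.re := hs
      have hs1 : s ≠ 1 := by rintro rfl; simp at hs
      rw [gfun_eq χ hs1, zeta_mul_L χ hs]
      rfl
    rw [e.iteratedDeriv_eq, iteratedDeriv_sub]
    · push_cast
      congr 1
      rw [iteratedDeriv_const_mul_field, iteratedDeriv_eq_iterate, iter_deriv_inv_linear_sub]
      norm_num
    · have := LSeries_analyticOnNhd (χ.zetaMul) (2 : ℂ) (by simpa using habs)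
      exact this.contDiffAt
    · have : ContDiffAt ℂ m (fun s : ℂ => (1 * s - 1)⁻¹) 2 := by
        apply ContDiffAt.inv
        · fun_prop
        · norm_num
      exact contDiffAt_const.mul this
  have hfac : ∀ m : ℕ, (m.factorial : ℂ) ≠ 0 := fun m => by exact_mod_cast m.factorial_ne_zero
  set b : ℕ → ℝ := fun m => (Dm m).re / m.factorial with hbdef
  have hcoef : ∀ m, (m.factorial : ℂ)⁻¹ * ((-1) ^ m * iteratedDeriv m (gfun χ) 2) =
      (b m : ℂ) - χ.LFunction 1 := by
    intro m
    rw [hder m]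
    have : (b m : ℂ) = Dm m / m.factorial := by
      rw [hDre m, hbdef]; push_cast; rfl
    rw [this, hDm]
    have e : ((-1 : ℂ) ^ m) * (-1) ^ m = 1 := by rw [← mul_pow]; simp
    have := hfac m
    field_simp
    linear_combination (-(χ.LFunction 1) * m.factorial) * e
  have hnorm : ∀ m, ‖(b m : ℂ) - χ.LFunction 1‖ ≤ C * N * (3 / 4) ^ m := by
    intro m
    rw [← hcoef m, norm_mul, norm_mul, norm_pow, norm_neg, norm_one, one_pow, one_mul, norm_inv,
      Complex.norm_natCast]
    have := Complex.norm_iteratedDeriv_le_of_forall_mem_sphere_norm_le m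
      (by norm_num : (0 : ℝ) < 4 / 3) ((gfun_diff hχ).diffContOnCl (s := Metric.ball 2 (4 / 3)))
      (hb N χ hχ)
    have hf : (0 : ℝ) < m.factorial := by exact_mod_cast m.factorial_pos
    rw [inv_mul_le_iff₀ hf]
    refine this.trans (le_of_eq ?_)
    have : ((4 : ℝ) / 3) ^ m * (3 / 4) ^ m = 1 := by rw [← mul_pow]; norm_num
    rw [div_eq_iff (by positivity)]
    linear_combination (-(m.factorial : ℝ) * (C * N)) * this
  have him : (χ.LFunction 1).im = 0 := by
    have t : Tendsto (fun m : ℕ => C * N * (3 / 4 : ℝ) ^ m) atTop (𝓝 0) := by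
      simpa using (tendsto_pow_atTop_nhds_zero_of_lt_one (by norm_num : (0 : ℝ) ≤ 3 / 4)
        (by norm_num)).const_mul (C * N)
    have : |(χ.LFunction 1).im| ≤ 0 := by
      refine ge_of_tendsto' t fun m => ?_
      refine le_trans ?_ (hnorm m)
      have := Complex.abs_im_le_norm ((b m : ℂ) - χ.LFunction 1)
      simpa using this
    exact abs_nonpos_iff.mp this
  have hlam : χ.LFunction 1 = (((χ.LFunction 1).re : ℝ) : ℂ) := by
    apply Complex.ext <;> simp [him]
  set lam := (χ.LFunction 1).re with hlamdef
  have hsumC : ∀ s : ℝ, HasSum (fun m => (((b m - lam) * (2 - s) ^ m : ℝ) : ℂ)) (gfun χ s) := by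
    intro s
    have := Complex.hasSum_taylorSeries_of_entire (gfun_diff hχ) 2 (s : ℂ)
    have e : (fun m => (((b m - lam) * (2 - s) ^ m : ℝ) : ℂ)) = fun m : ℕ =>
        ((m.factorial : ℂ)⁻¹) • ((s : ℂ) - 2) ^ m • iteratedDeriv m (gfun χ) 2 := by
      funext m
      have h1 := hcoef m
      rw [hlam] at h1
      have h2 : ((s : ℂ) - 2) ^ m = (-1) ^ m * (2 - s) ^ m := by rw [← mul_pow]; ring
      push_cast
      rw [← h1, h2, smul_eq_mul, smul_eq_mul]
      ring
    rw [e]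
    exact this
  have hreal : ∀ s : ℝ, s ≠ 1 → riemannZeta s * χ.LFunction s =
      (((riemannZeta s * χ.LFunction s).re : ℝ) : ℂ) ∧
      HasSum (fun m => (b m - lam) * (2 - s) ^ m)
        ((riemannZeta s * χ.LFunction s).re - lam / (s - 1)) := by
    intro s hs
    have h1 := hsumC s
    have hs' : (s : ℂ) ≠ 1 := by exact_mod_cast hs
    have h2 := Complex.hasSum_re h1
    have h3 := Complex.hasSum_im h1
    simp only [Complex.ofReal_im, Complex.ofReal_re] at h2 h3
    have h4 := h3.unique hasSum_zero
    have e : riemannZeta s * χ.LFunction s = gfun χ s + ((lam / (s - 1) : ℝ) : ℂ) := by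
      rw [gfun_eq χ hs', hlam]
      push_cast
      rw [one_mul]
      ring
    constructor
    · apply Complex.ext
      · simp
      · rw [e, Complex.add_im, h4, Complex.ofReal_im, Complex.ofReal_im, zero_add]
    · rw [e, Complex.add_re, Complex.ofReal_re, add_sub_cancel_right]
      exact h2
  refine ⟨b, lam, fun s => (riemannZeta s * χ.LFunction s).re, hlam, ?_, ?_, ?_, ?_, hreal⟩
  · intro m
    exact div_nonneg (Complex.nonneg_iff.mp (hpos m)).1 (Nat.cast_nonneg _)
  · have := zetaMul_ge_one hχ2 (σ := 2) (by norm_num)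
    simpa [hbdef, hDm] using this
  · intro m
    have := hnorm m
    rw [hlam] at this
    rw [← Real.norm_eq_abs, ← Complex.norm_real]
    push_cast
    exact this
  · intro s hs
    have := zetaMul_ge_one hχ2 hs
    rwa [← zeta_mul_L χ (by simpa using hs)] at this

/-! ### Part C: real-variable consequences of the Taylor expansion -/

lemma taylor_approx {b : ℕ → ℝ} {lam H g s : ℝ} {M : ℕ} (hH : 0 ≤ H)
    (hb : ∀ m, |b m - lam| ≤ H * (3 / 4) ^ m) (hM : 20 * H * (4 / 5) ^ M ≤ 1)
    (hs1 : s ≠ 1) (hs2 : s ≤ 2) (hs3 : 19 / 20 ≤ s)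
    (hsum : HasSum (fun m => (b m - lam) * (2 - s) ^ m) (g - lam / (s - 1))) :
    |g - (∑ m ∈ Finset.range M, b m * (2 - s) ^ m + lam * (2 - s) ^ M / (s - 1))| ≤ 1 / 4 := by
  set u := 2 - s with hu
  have hu0 : 0 ≤ u := by rw [hu]; linarith
  have hu1 : u ≤ 21 / 20 := by rw [hu]; linarith
  have hne : s - 1 ≠ 0 := sub_ne_zero.mpr hs1
  have hsu : s - 1 = 1 - u := by rw [hu]; ring
  have hsplit := hsum.summable.sum_add_tsum_nat_add M
  rw [hsum.tsum_eq] at hsplit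
  have hgeo : (∑ m ∈ Finset.range M, u ^ m) * (s - 1) = 1 - u ^ M := by
    rw [hsu, geom_sum_mul_neg]
  have hfin : ∑ m ∈ Finset.range M, (b m - lam) * u ^ m =
      ∑ m ∈ Finset.range M, b m * u ^ m - lam * (1 - u ^ M) / (s - 1) := by
    rw [← hgeo]
    simp_rw [sub_mul]
    rw [Finset.sum_sub_distrib, ← Finset.mul_sum]
    field_simp
  have hgs : Summable fun i : ℕ => H * (4 / 5 : ℝ) ^ M * (4 / 5) ^ i :=
    (summable_geometric_of_lt_one (by norm_num) (by norm_num)).mul_left _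
  have htail : ‖∑' i, (b (i + M) - lam) * u ^ (i + M)‖ ≤ H * (4 / 5) ^ M * 5 := by
    have hs : HasSum (fun i : ℕ => H * (4 / 5 : ℝ) ^ M * (4 / 5) ^ i) (H * (4 / 5) ^ M * 5) := by
      have := (hasSum_geometric_of_lt_one (r := (4 / 5 : ℝ)) (by norm_num) (by norm_num)).mul_left
        (H * (4 / 5 : ℝ) ^ M)
      norm_num at this ⊢
      exact this
    refine tsum_of_norm_bounded hs fun i => ?_
    rw [norm_mul, norm_pow, Real.norm_eq_abs, Real.norm_eq_abs, abs_of_nonneg hu0]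
    calc _ ≤ H * (3 / 4) ^ (i + M) * u ^ (i + M) := by gcongr; exact hb _
      _ = H * (3 / 4 * u) ^ (i + M) := by rw [mul_pow]; ring
      _ ≤ H * (4 / 5) ^ (i + M) := by gcongr; linarith
      _ = _ := by rw [pow_add]; ring
  have e : g - (∑ m ∈ Finset.range M, b m * u ^ m + lam * u ^ M / (s - 1)) =
      ∑' i, (b (i + M) - lam) * u ^ (i + M) := by
    have : lam * (1 - u ^ M) / (s - 1) = lam / (s - 1) - lam * u ^ M / (s - 1) := by ring
    linarith
  rw [e, ← Real.norm_eq_abs]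
  linarith

lemma one_sub_ge_exp {x : ℝ} (h0 : 0 ≤ x) (h1 : x ≤ 1 / 2) : Real.exp (-(2 * x)) ≤ 1 - x := by
  have h := Real.add_one_le_exp (2 * x)
  rw [Real.exp_neg, inv_le_comm₀ (Real.exp_pos _) (by linarith)]
  refine le_trans ?_ h
  rw [inv_le_iff_one_le_mul₀ (by linarith)]
  nlinarith

set_option maxHeartbeats 1000000 in
theorem analytic : ∃ K : ℝ, 1 ≤ K ∧ ∀ (N : ℕ) [NeZero N] (χ : DirichletCharacter ℂ N),
    χ ^ 2 = 1 → χ ≠ 1 → ∀ l : ℝ, 2 ≤ l → (N : ℝ) ≤ Real.exp l →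
      ∃ (lam : ℝ) (f : ℝ → ℝ), χ.LFunction 1 = lam ∧ 0 ≤ lam ∧
      (∀ s : ℝ, 1 < s → 1 ≤ f s) ∧
      (∀ s : ℝ, s ≠ 1 → riemannZeta s * χ.LFunction s = f s) ∧
      (∀ s₁ s₂ : ℝ, 1 < s₂ → s₂ ≤ s₁ → s₁ ≤ 1 + 1 / l →
        (s₂ - 1) * f s₂ ≤ K * ((s₁ - 1) * f s₁)) ∧
      (∀ δ s₁ s₂ : ℝ, 0 < δ → δ ≤ 1 / 20 → f (1 - δ) = 0 → δ ≤ s₂ - 1 → s₂ ≤ 1 + 1 / l → 1 < s₁ →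
        s₁ ≤ 1 + 1 / l → f s₂ ≤ K * f s₁) ∧
      (∀ δ : ℝ, 0 < δ → δ ≤ 1 / 20 → f (1 - δ) ≤ 0 →
        f (1 + 1 / l) ≤ K * Real.exp (δ * (K * l)) * (1 / δ + l) * lam) := by
  obtain ⟨C, hC, hT⟩ := taylor
  -- the truncation parameter
  set A : ℝ := (Real.log (20 * C + 1) + 1) / Real.log (5 / 4) + 1 with hA
  have hl54 : 0 < Real.log (5 / 4) := Real.log_pos (by norm_num)
  have hlC : 0 < Real.log (20 * C + 1) := Real.log_pos (by linarith)
  have hA1 : 1 ≤ A := by rw [hA]; have := div_nonneg (by linarith : 0 ≤ Real.log (20 * C + 1) + 1) hl54.le; linarith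
  set η : ℝ := Real.exp (-(4 * A)) with hη
  have hη0 : 0 < η := Real.exp_pos _
  have hη1 : η ≤ 1 := by rw [hη]; exact Real.exp_le_one_iff.mpr (by linarith)
  have hηi : 1 ≤ η⁻¹ := (one_le_inv₀ hη0).mpr hη1
  have hAη : 2 * A ≤ η⁻¹ := by
    rw [hη, Real.exp_neg, inv_inv]
    have := Real.add_one_le_exp (4 * A)
    linarith
  refine ⟨4 * η⁻¹, by linarith, ?_⟩
  intro N _ χ hχ2 hχ l hl hN
  obtain ⟨b, lam, f, hlam, hb0, hb1, hbl, hf1, hfs⟩ := hT N χ hχ2 hχ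
  have hN0 : (0 : ℝ) ≤ N := Nat.cast_nonneg N
  -- lam ≥ 0
  have hlam0 : 0 ≤ lam := by
    have t : Tendsto (fun m : ℕ => C * N * (3 / 4 : ℝ) ^ m) atTop (𝓝 0) := by
      simpa using (tendsto_pow_atTop_nhds_zero_of_lt_one (by norm_num : (0 : ℝ) ≤ 3 / 4)
        (by norm_num)).const_mul (C * N)
    have : -lam ≤ 0 := by
      refine ge_of_tendsto' t fun m => ?_
      have := (abs_le.mp (hbl m)).2
      have := hb0 m
      linarith [(abs_le.mp (hbl m)).2, neg_abs_le (b m - lam), le_abs_self (b m - lam), (abs_le.mp (hbl m)).1]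
    linarith
  obtain ⟨M, hM0, hM1, hM2⟩ : ∃ M : ℕ, 0 < M ∧ (M : ℝ) ≤ 2 * A * l ∧ 20 * (C * N) * (4 / 5 : ℝ) ^ M ≤ 1 := by
    refine ⟨⌈A * l⌉₊, Nat.ceil_pos.mpr (by positivity), ?_, ?_⟩
    · have := Nat.ceil_lt_add_one (a := A * l) (by positivity)
      nlinarith
    · have h1 : A * l ≤ (⌈A * l⌉₊ : ℝ) := Nat.le_ceil _
      have h2 : (4 / 5 : ℝ) ^ ⌈A * l⌉₊ = Real.exp (-(⌈A * l⌉₊ * Real.log (5 / 4))) := by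
        rw [← Real.rpow_natCast, Real.rpow_def_of_pos (by norm_num)]
        congr 1
        have : Real.log (4 / 5) = -Real.log (5 / 4) := by rw [← Real.log_inv]; norm_num
        rw [this]; ring
      rw [h2]
      have h3 : Real.log (20 * C + 1) + l ≤ ⌈A * l⌉₊ * Real.log (5 / 4) := by
        have : A * Real.log (5 / 4) = Real.log (20 * C + 1) + 1 + Real.log (5 / 4) := by
          rw [hA]; field_simp
        calc _ ≤ A * Real.log (5 / 4) * l := by rw [this]; nlinarith
          _ = A * l * Real.log (5 / 4) := by ring
          _ ≤ _ := by gcongr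
      calc _ ≤ (20 * C + 1) * Real.exp l * Real.exp (-(Real.log (20 * C + 1) + l)) := by
            have : 20 * (C * N) ≤ (20 * C + 1) * Real.exp l := by nlinarith [Real.exp_pos l]
            gcongr
        _ = 1 := by
            rw [neg_add, Real.exp_add, Real.exp_neg, Real.exp_neg, Real.exp_log (by linarith)]
            have := Real.exp_pos l
            field_simp
  have happ := fun (s : ℝ) (h1 : s ≠ 1) (h2 : s ≤ 2) (h3 : 19 / 20 ≤ s) =>
    abs_le.mp (taylor_approx (by positivity) hbl hM2 h1 h2 h3 (hfs s h1).2)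
  set S := ∑ m ∈ Finset.range M, b m with hS
  have hSM : 1 ≤ S := by
    rw [hS]
    exact hb1.trans (Finset.single_le_sum (f := b) (fun i _ => hb0 i) (Finset.mem_range.mpr hM0))
  -- two-sided bounds to the right of `1`
  have hl0 : 0 < l := by linarith
  have hli : 1 / l ≤ 1 / 2 := by
    apply one_div_le_one_div_of_le <;> linarith
  have hup : ∀ s : ℝ, 1 < s → s ≤ 1 + 1 / l → f s ≤ 5 / 4 * (S + lam / (s - 1)) := by
    intro s h1 h2
    have h := (happ s h1.ne' (by linarith) (by linarith)).2
    have hs : 0 < s - 1 := by linarith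
    have e1 : ∑ m ∈ Finset.range M, b m * (2 - s) ^ m ≤ S := by
      refine Finset.sum_le_sum fun m _ => mul_le_of_le_one_right (hb0 m) ?_
      exact pow_le_one₀ (by linarith) (by linarith)
    have e2 : lam * (2 - s) ^ M / (s - 1) ≤ lam / (s - 1) := by
      gcongr
      exact mul_le_of_le_one_right hlam0 (pow_le_one₀ (by linarith) (by linarith))
    have e3 : 0 ≤ lam / (s - 1) := by positivity
    linarith
  have hlow : ∀ s : ℝ, 1 < s → s ≤ 1 + 1 / l → S + lam / (s - 1) ≤ 5 / 4 * η⁻¹ * f s := by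
    intro s h1 h2
    have h := (happ s h1.ne' (by linarith) (by linarith)).1
    have hs : 0 < s - 1 := by linarith
    have hf := hf1 s h1
    have hu : η ≤ (2 - s) ^ M := by
      have a1 : Real.exp (-(2 * (1 / l))) ≤ 2 - s :=
        (one_sub_ge_exp (by positivity) hli).trans (by linarith)
      calc η ≤ Real.exp (-(2 * (1 / l))) ^ M := by
            rw [← Real.exp_nat_mul, hη]
            apply Real.exp_le_exp.mpr
            have : (M : ℝ) * (1 / l) ≤ 2 * A := by
              rw [mul_one_div, div_le_iff₀ hl0]; exact hM1
            linarith
        _ ≤ _ := by gcongr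
    have e1 : η * S ≤ ∑ m ∈ Finset.range M, b m * (2 - s) ^ m := by
      rw [hS, Finset.mul_sum]
      refine Finset.sum_le_sum fun m hm => ?_
      rw [mul_comm]
      refine mul_le_mul_of_nonneg_left ?_ (hb0 m)
      refine hu.trans ?_
      exact pow_le_pow_of_le_one (by linarith) (by linarith) (Finset.mem_range.mp hm).le
    have e2 : η * (lam / (s - 1)) ≤ lam * (2 - s) ^ M / (s - 1) := by
      have : η * (lam / (s - 1)) = lam * η / (s - 1) := by ring
      rw [this]
      gcongr
    have e3 : η * (S + lam / (s - 1)) ≤ 5 / 4 * f s := by linarith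
    calc _ = η⁻¹ * (η * (S + lam / (s - 1))) := by field_simp
      _ ≤ η⁻¹ * (5 / 4 * f s) := by gcongr
      _ = _ := by ring
  refine ⟨lam, f, hlam, hlam0, hf1, fun s hs => (hfs s hs).1, ?_, ?_, ?_⟩
  · intro s₁ s₂ h2 h21 h1
    have a := hup s₂ h2 (by linarith)
    have b' := hlow s₁ (by linarith) h1
    have p1 : 0 < s₁ - 1 := by linarith
    have p2 : 0 < s₂ - 1 := by linarith
    have q1 : (s₁ - 1) * (S + lam / (s₁ - 1)) = (s₁ - 1) * S + lam := by field_simp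
    have q2 : (s₂ - 1) * (S + lam / (s₂ - 1)) = (s₂ - 1) * S + lam := by field_simp
    have hf := hf1 s₁ (by linarith)
    calc (s₂ - 1) * f s₂ ≤ (s₂ - 1) * (5 / 4 * (S + lam / (s₂ - 1))) := by gcongr
      _ = 5 / 4 * ((s₂ - 1) * S + lam) := by rw [← q2]; ring
      _ ≤ 5 / 4 * ((s₁ - 1) * S + lam) := by gcongr
      _ = 5 / 4 * ((s₁ - 1) * (S + lam / (s₁ - 1))) := by rw [q1]
      _ ≤ 5 / 4 * ((s₁ - 1) * (5 / 4 * η⁻¹ * f s₁)) := by gcongr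
      _ = 25 / 16 * η⁻¹ * ((s₁ - 1) * f s₁) := by ring
      _ ≤ _ := by gcongr; norm_num
  · intro δ s₁ s₂ hδ hδ2 hz h2 h2' h1 h1'
    have h := (happ (1 - δ) (by linarith) (by linarith) (by linarith)).2
    rw [hz] at h
    have eu : 2 - (1 - δ) = 1 + δ := by ring
    have ed : 1 - δ - 1 = -δ := by ring
    rw [eu, ed, div_neg] at h
    have hU : 1 ≤ (1 + δ) ^ M := one_le_pow₀ (by linarith)
    have e1 : ∑ m ∈ Finset.range M, b m * (1 + δ) ^ m ≤ (1 + δ) ^ M * S := by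
      rw [hS, Finset.mul_sum]
      refine Finset.sum_le_sum fun m hm => ?_
      rw [mul_comm]
      refine mul_le_mul_of_nonneg_right ?_ (hb0 m)
      exact pow_le_pow_right₀ (by linarith) (Finset.mem_range.mp hm).le
    have hl1 : lam ≤ 5 / 4 * δ * S := by
      have a1 : lam * (1 + δ) ^ M / δ ≤ 5 / 4 * ((1 + δ) ^ M * S) := by
        have : 1 ≤ (1 + δ) ^ M * S := one_le_mul_of_one_le_of_one_le hU hSM
        linarith
      rw [div_le_iff₀ hδ] at a1
      have a2 : lam * (1 + δ) ^ M ≤ (5 / 4 * δ * S) * (1 + δ) ^ M := by linarith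
      exact le_of_mul_le_mul_right a2 (by linarith)
    have p2 : 0 < s₂ - 1 := by linarith
    have hl2 : lam / (s₂ - 1) ≤ 5 / 4 * S := by
      rw [div_le_iff₀ p2]
      have : δ * S ≤ (s₂ - 1) * S := by gcongr
      linarith
    have a := hup s₂ (by linarith) h2'
    have b' := hlow s₁ h1 h1'
    have p1 : 0 ≤ lam / (s₁ - 1) := div_nonneg hlam0 (by linarith)
    have hf := hf1 s₁ h1
    have : 0 ≤ η⁻¹ * f s₁ := by positivity
    linarith
  · intro δ hδ hδ2 hz
    have eu : 2 - (1 - δ) = 1 + δ := by ring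
    have ed : 1 - δ - 1 = -δ := by ring
    have h := (happ (1 - δ) (by linarith) (by linarith) (by linarith)).1
    rw [eu, ed, div_neg] at h
    have e1 : S ≤ ∑ m ∈ Finset.range M, b m * (1 + δ) ^ m := by
      rw [hS]
      refine Finset.sum_le_sum fun m hm => ?_
      exact le_mul_of_one_le_right (hb0 m) (one_le_pow₀ (by linarith))
    have hU : (1 + δ) ^ M ≤ Real.exp (δ * (4 * η⁻¹ * l)) := by
      calc (1 + δ) ^ M ≤ Real.exp δ ^ M := by
            gcongr
            linarith [Real.add_one_le_exp δ]
        _ = Real.exp (M * δ) := by rw [← Real.exp_nat_mul]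
        _ ≤ _ := by
            apply Real.exp_le_exp.mpr
            rw [mul_comm]
            gcongr
            exact hM1.trans (mul_le_mul_of_nonneg_right (by linarith) hl0.le)
    set E := Real.exp (δ * (4 * η⁻¹ * l)) with hE
    have hE1 : 1 ≤ E := by
      rw [hE]
      exact Real.one_le_exp (by positivity)
    have h2 : S ≤ 4 / 3 * (lam * (1 + δ) ^ M / δ) := by
      linarith
    have h3 : lam * (1 + δ) ^ M / δ ≤ lam * E * (1 / δ) := by
      rw [mul_one_div]; gcongr
    have h4 := hup (1 + 1 / l) (by have : 0 < 1 / l := by positivity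
                                   linarith) le_rfl
    have e4 : 1 + 1 / l - 1 = 1 / l := by ring
    rw [e4, div_div_eq_mul_div, div_one] at h4
    have h5 : 0 ≤ lam * (1 / δ) := by positivity
    have h6 : lam * l ≤ E * (lam * l) := le_mul_of_one_le_left (by positivity) hE1
    calc f (1 + 1 / l) ≤ 5 / 4 * (4 / 3 * (lam * E * (1 / δ)) + lam * l) := by linarith
      _ ≤ 4 * (E * (1 / δ + l) * lam) := by nlinarith
      _ ≤ 4 * η⁻¹ * (E * (1 / δ + l) * lam) := by
          refine mul_le_mul_of_nonneg_right ?_ (by positivity)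
          linarith
      _ = _ := by ring

/-! ### Part D: the logarithm of `L(σ, χ)` -/

/-- The weights `Λ(n) / (log n · n^σ)`. -/
def wt (σ : ℝ) (n : ℕ) : ℝ := ArithmeticFunction.vonMangoldt n / Real.log n * (n : ℝ) ^ (-σ)

lemma wt_nonneg (σ : ℝ) (n : ℕ) : 0 ≤ wt σ n := by
  rw [wt]
  have := ArithmeticFunction.vonMangoldt_nonneg (n := n)
  have := Real.log_natCast_nonneg n
  positivity

lemma wt_le (σ : ℝ) (n : ℕ) : wt σ n ≤ (n : ℝ) ^ (-σ) := by
  rw [wt]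
  refine mul_le_of_le_one_left (by positivity) ?_
  exact div_le_one_of_le₀ ArithmeticFunction.vonMangoldt_le_log (Real.log_natCast_nonneg n)

lemma wt_summable {σ : ℝ} (hσ : 1 < σ) : Summable (wt σ) := by
  refine Summable.of_nonneg_of_le (wt_nonneg σ) (wt_le σ) ?_
  exact Real.summable_nat_rpow.mpr (by linarith)

lemma wt_anti {σ τ : ℝ} (h : τ ≤ σ) (n : ℕ) : wt σ n ≤ wt τ n := by
  rcases Nat.eq_zero_or_pos n with rfl | hn
  · simp [wt]
  · rw [wt, wt]
    refine mul_le_mul_of_nonneg_left ?_ ?_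
    · exact Real.rpow_le_rpow_of_exponent_le (by exact_mod_cast hn) (by linarith)
    · exact div_nonneg ArithmeticFunction.vonMangoldt_nonneg (Real.log_natCast_nonneg n)

/-- `log ζ(σ)` -/
def P (σ : ℝ) : ℝ := ∑' n, wt σ n

/-- `log L(σ, χ)` -/
def X {N : ℕ} (χ : DirichletCharacter ℂ N) (σ : ℝ) : ℝ := ∑' n : ℕ, wt σ n * (χ n).re

lemma chi_real {N : ℕ} {χ : DirichletCharacter ℂ N} (hχ : χ ^ 2 = 1) (a : ZMod N) :
    χ a = ((χ a).re : ℂ) := by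
  rcases MulChar.isQuadratic_iff_sq_eq_one.mpr hχ a with h | h | h <;> simp [h]

lemma chi_abs {N : ℕ} (χ : DirichletCharacter ℂ N) (a : ZMod N) :
    |(χ a).re| ≤ 1 := (Complex.abs_re_le_norm _).trans (χ.norm_le_one a)

lemma X_summand_abs {N : ℕ} (χ : DirichletCharacter ℂ N) (σ : ℝ) (n : ℕ) :
    |wt σ n * (χ n).re| ≤ wt σ n := by
  rw [abs_mul, abs_of_nonneg (wt_nonneg σ n)]
  exact mul_le_of_le_one_right (wt_nonneg σ n) (chi_abs χ _)

lemma X_summable {N : ℕ} (χ : DirichletCharacter ℂ N) {σ : ℝ} (hσ : 1 < σ) :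
    Summable fun n : ℕ => wt σ n * (χ n).re :=
  Summable.of_norm_bounded (wt_summable hσ) (X_summand_abs χ σ)

lemma X_abs_le {N : ℕ} (χ : DirichletCharacter ℂ N) {σ : ℝ} (hσ : 1 < σ) : |X χ σ| ≤ P σ := by
  rw [X, P, ← Real.norm_eq_abs]
  exact tsum_of_norm_bounded (wt_summable hσ).hasSum (X_summand_abs χ σ)

lemma L_eq_exp {N : ℕ} [NeZero N] {χ : DirichletCharacter ℂ N} (hχ : χ ^ 2 = 1) {σ : ℝ}
    (hσ : 1 < σ) : χ.LFunction σ = ((Real.exp (X χ σ) : ℝ) : ℂ) := by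
  have hs : 1 < (σ : ℂ).re := by simpa using hσ
  rw [χ.LFunction_eq_LSeries hs, ← χ.LSeries_eq_exp_LSeries hs, Complex.ofReal_exp,
    LSeries_def₀ (by simp)]
  congr 1
  rw [X, Complex.ofReal_tsum]
  congr 1
  funext n
  rw [wt, chi_real hχ]
  push_cast
  rw [Complex.ofReal_cpow (Nat.cast_nonneg n), Complex.ofReal_re]
  push_cast
  rw [Complex.cpow_neg]
  ring

lemma X_modOne (σ : ℝ) : X (1 : DirichletCharacter ℂ 1) σ = P σ := by
  rw [X, P]
  congr 1
  funext n
  rw [MulChar.one_apply (isUnit_of_subsingleton _)]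
  simp

lemma zeta_eq_exp {σ : ℝ} (hσ : 1 < σ) : riemannZeta σ = ((Real.exp (P σ) : ℝ) : ℂ) := by
  rw [← X_modOne, ← L_eq_exp (by simp) hσ, DirichletCharacter.LFunction_modOne_eq]

lemma P_bound : ∃ κ : ℝ, 0 < κ ∧ ∀ σ : ℝ, 1 < σ → σ ≤ 2 → |P σ + Real.log (σ - 1)| ≤ κ := by
  have hc : ContinuousOn (fun t : ℝ => Real.log ‖riemannZeta₁ t‖) (Set.Icc 1 2) := by
    refine ContinuousOn.log ?_ ?_
    · have := differentiable_riemannZeta₁.continuous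
      fun_prop
    · intro t ht
      rw [norm_ne_zero_iff]
      rcases eq_or_ne t 1 with rfl | h1
      · simp
      · intro h
        have h1' : (t : ℂ) ≠ 1 := by exact_mod_cast h1
        have := riemannZeta_eq_inv_sub_mul h1'
        rw [h, mul_zero] at this
        exact riemannZeta_ne_zero_of_one_le_re (by simpa using ht.1) this
  obtain ⟨κ, hκ⟩ := isCompact_Icc.exists_bound_of_continuousOn hc
  refine ⟨|κ| + 1, by positivity, fun σ h1 h2 => ?_⟩
  have := hκ σ ⟨h1.le, h2⟩
  have h1' : (σ : ℂ) ≠ 1 := by exact_mod_cast h1.ne'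
  have hs : (0 : ℝ) < σ - 1 := by linarith
  have e : riemannZeta₁ σ = (((σ - 1) * Real.exp (P σ) : ℝ) : ℂ) := by
    have a := riemannZeta_eq_inv_sub_mul h1'
    rw [zeta_eq_exp h1] at a
    have : (σ : ℂ) - 1 ≠ 0 := sub_ne_zero.mpr h1'
    push_cast at a ⊢
    rw [a]
    field_simp
  rw [e, Complex.norm_real, Real.norm_eq_abs, Real.norm_eq_abs, Real.log_abs,
    Real.log_mul hs.ne' (Real.exp_pos _).ne', Real.log_exp] at this
  rw [add_comm]
  exact this.trans ((le_abs_self κ).trans (by linarith))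

/-- The three analytic inputs in logarithmic form. -/
theorem analytic_log : ∃ κ : ℝ, 1 ≤ κ ∧ (∀ σ : ℝ, 1 < σ → σ ≤ 2 → |P σ + Real.log (σ - 1)| ≤ κ) ∧
    (∀ (N : ℕ) [NeZero N] (χ : DirichletCharacter ℂ N), χ ^ 2 = 1 → χ ≠ 1 →
      ∀ l : ℝ, 2 ≤ l → (N : ℝ) ≤ Real.exp l →
      (∀ s₁ s₂ : ℝ, 1 < s₂ → s₂ ≤ s₁ → s₁ ≤ 1 + 1 / l → X χ s₂ ≤ X χ s₁ + κ) ∧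
      (∀ δ s₂ : ℝ, 0 < δ → δ ≤ 1 / 20 → χ.LFunction ((1 - δ : ℝ) : ℂ) = 0 → δ ≤ s₂ - 1 →
        s₂ ≤ 1 + 1 / l → X χ s₂ ≤ X χ (1 + 1 / l) + κ + Real.log ((s₂ - 1) * l))) ∧
    (∃ c₀ : ℝ, 0 < c₀ ∧ ∀ c : ℝ, 0 < c → c ≤ c₀ → ∃ κ' : ℝ, 0 ≤ κ' ∧
      ∀ (N : ℕ) [NeZero N] (χ : DirichletCharacter ℂ N), χ ^ 2 = 1 → χ ≠ 1 →
      ∀ l : ℝ, 2 ≤ l → (N : ℝ) ≤ Real.exp l →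
      (∀ β : ℝ, 1 - c / l < β → χ.LFunction β ≠ 0) →
        Real.exp (X χ (1 + 1 / l) - κ') ≤ (χ.LFunction 1).re) := by
  obtain ⟨K, hK, hA⟩ := analytic
  obtain ⟨κ₀, hκ₀, hP⟩ := P_bound
  have hlK : 0 ≤ Real.log K := Real.log_nonneg hK
  have hfexp : ∀ (N : ℕ) [NeZero N] (χ : DirichletCharacter ℂ N), χ ^ 2 = 1 → ∀ f : ℝ → ℝ,
      (∀ s : ℝ, s ≠ 1 → riemannZeta s * χ.LFunction s = f s) → ∀ s : ℝ, 1 < s →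
      f s = Real.exp (P s + X χ s) := by
    intro N _ χ hχ f hf s hs
    have := hf s hs.ne'
    rw [zeta_eq_exp hs, L_eq_exp hχ hs] at this
    rw [Real.exp_add]
    exact_mod_cast this.symm
  refine ⟨Real.log K + 2 * κ₀ + 1, by linarith, fun σ h1 h2 => (hP σ h1 h2).trans (by linarith), ?_, ?_⟩
  · intro N _ χ hχ2 hχ l hl hN
    obtain ⟨lam, f, hlam, hlam0, hf1, hfs, ha, hb, -⟩ := hA N χ hχ2 hχ l hl hN
    have hfe := hfexp N χ hχ2 f hfs
    have hl0 : 0 < l := by linarith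
    have hli : 1 / l ≤ 1 / 2 := by
      apply one_div_le_one_div_of_le <;> linarith
    have hli0 : 0 < 1 / l := by positivity
    constructor
    · intro s₁ s₂ h2 h21 h1
      have h := ha s₁ s₂ h2 h21 h1
      have p1 : 0 < s₁ - 1 := by linarith
      have p2 : 0 < s₂ - 1 := by linarith
      rw [hfe s₂ h2, hfe s₁ (by linarith)] at h
      have h' := Real.log_le_log (by positivity) h
      rw [Real.log_mul p2.ne' (Real.exp_pos _).ne', Real.log_exp, Real.log_mul (by positivity)
        (by positivity), Real.log_mul p1.ne' (Real.exp_pos _).ne', Real.log_exp] at h'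
      have q1 := abs_le.mp (hP s₁ (by linarith) (by linarith))
      have q2 := abs_le.mp (hP s₂ (by linarith) (by linarith))
      linarith [q1.2, q2.1]
    · intro δ s₂ hδ hδ2 hz h2 h2'
      have hz' : f (1 - δ) = 0 := by
        have := hfs (1 - δ) (by linarith)
        rw [hz, mul_zero] at this
        exact_mod_cast this.symm
      have h := hb δ (1 + 1 / l) s₂ hδ hδ2 hz' h2 h2' (by linarith) le_rfl
      rw [hfe s₂ (by linarith), hfe (1 + 1 / l) (by linarith)] at h
      have h' := Real.log_le_log (by positivity) h
      rw [Real.log_exp, Real.log_mul (by positivity) (by positivity), Real.log_exp] at h'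
      have p2 : 0 < s₂ - 1 := by linarith
      have q1 := abs_le.mp (hP (1 + 1 / l) (by linarith) (by linarith))
      have q2 := abs_le.mp (hP s₂ (by linarith) (by linarith))
      have e1 : Real.log (1 + 1 / l - 1) = - Real.log l := by
        rw [add_sub_cancel_left, one_div, Real.log_inv]
      rw [e1] at q1
      rw [Real.log_mul p2.ne' hl0.ne']
      linarith [q1.2, q2.1]
  · have hev : ∀ᶠ t : ℝ in 𝓝 1, riemannZeta₁ (t : ℂ) ≠ 0 := by
      have : Tendsto (fun t : ℝ => (t : ℂ)) (𝓝 1) (𝓝 1) := by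
        simpa using (Complex.continuous_ofReal.tendsto 1)
      exact this.eventually riemannZeta₁_ne_zero_of_near_one
    obtain ⟨ε, hε, hεz⟩ := Metric.eventually_nhds_iff.mp hev
    refine ⟨min ε (1 / 20), by positivity, fun c hc hc0 => ?_⟩
    have hcε : c ≤ ε := hc0.trans (min_le_left _ _)
    have hc20 : c ≤ 1 / 20 := hc0.trans (min_le_right _ _)
    set B := K * Real.exp (c * K) * (2 / c + 1) with hB
    have hB1 : 1 ≤ B := by
      rw [hB]
      have : 1 ≤ Real.exp (c * K) := Real.one_le_exp (by positivity)
      have h3 : 0 < 2 / c := by positivity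
      exact one_le_mul_of_one_le_of_one_le (one_le_mul_of_one_le_of_one_le hK this) (by linarith)
    refine ⟨Real.log B + κ₀, add_nonneg (Real.log_nonneg hB1) hκ₀.le, ?_⟩
    intro N _ χ hχ2 hχ l hl hN hnz
    obtain ⟨lam, f, hlam, hlam0, hf1, hfs, -, -, hcc⟩ := hA N χ hχ2 hχ l hl hN
    have hfe := hfexp N χ hχ2 f hfs
    have hl0 : 0 < l := by linarith
    have hli : 1 / l ≤ 1 / 2 := by
      apply one_div_le_one_div_of_le <;> linarith
    have hli0 : 0 < 1 / l := by positivity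
    have hlampos : 0 < lam := by
      refine lt_of_le_of_ne hlam0 fun h => ?_
      apply DirichletCharacter.LFunction_apply_one_ne_zero hχ
      rw [hlam, ← h, Complex.ofReal_zero]
    set δ := c / (2 * l) with hδ
    have hδ0 : 0 < δ := by positivity
    have hδc : δ < c / l := by
      rw [hδ]; gcongr; linarith
    have hδc' : δ ≤ c := by
      rw [hδ]; exact div_le_self hc.le (by linarith)
    have hδc'' : δ < c := by
      rw [hδ]; exact div_lt_self hc (by linarith)
    -- sign of `f (1 - δ)`
    have hsign : f (1 - δ) ≤ 0 := by
      set g : ℝ → ℝ := fun t => (riemannZeta₁ t * χ.LFunction t).re with hg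
      have hgc : Continuous g := by
        have h1 := differentiable_riemannZeta₁.continuous
        have h2 := (DirichletCharacter.differentiable_LFunction hχ).continuous
        exact Complex.continuous_re.comp ((h1.comp Complex.continuous_ofReal).mul
          (h2.comp Complex.continuous_ofReal))
      have hg1 : g 1 = lam := by simp [hg, hlam]
      have hgf : ∀ t : ℝ, t ≠ 1 → riemannZeta₁ t * χ.LFunction t = (((t - 1) * f t : ℝ) : ℂ) := by
        intro t ht
        have ht' : (t : ℂ) ≠ 1 := by exact_mod_cast ht
        have : (t : ℂ) - 1 ≠ 0 := sub_ne_zero.mpr ht'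
        have a := hfs t ht
        rw [riemannZeta_eq_inv_sub_mul ht'] at a
        push_cast
        rw [← a]
        field_simp
      by_contra hcon
      push Not at hcon
      have hgneg : g (1 - δ) < 0 := by
        have : g (1 - δ) = -δ * f (1 - δ) := by
          simp only [hg]
          rw [hgf (1 - δ) (by linarith), Complex.ofReal_re]
          ring
        rw [this]
        nlinarith
      have hIVT : (0 : ℝ) ∈ g '' Set.Icc (1 - δ) 1 :=
        intermediate_value_Icc (by linarith) hgc.continuousOn ⟨hgneg.le, by rw [hg1]; exact hlam0⟩
      obtain ⟨t, ⟨ht1, ht2⟩, ht0⟩ := hIVT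
      rcases eq_or_ne t 1 with rfl | htne
      · rw [hg1] at ht0
        exact hlampos.ne' ht0
      · have h0 : riemannZeta₁ t * χ.LFunction t = 0 := by
          have h := hgf t htne
          have h2 : g t = (t - 1) * f t := by
            simp only [hg]; rw [h, Complex.ofReal_re]
          rw [h, ← h2, ht0, Complex.ofReal_zero]
        rcases mul_eq_zero.mp h0 with h | h
        · refine hεz ?_ h
          rw [Real.dist_eq, abs_lt]
          constructor <;> linarith
        · exact hnz t (by linarith) h
    have h := hcc δ hδ0 (by linarith) hsign
    rw [hfe (1 + 1 / l) (by linarith)] at h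
    have q1 := abs_le.mp (hP (1 + 1 / l) (by linarith) (by linarith))
    have e1 : Real.log (1 + 1 / l - 1) = - Real.log l := by
      rw [add_sub_cancel_left, one_div, Real.log_inv]
    rw [e1] at q1
    have e2 : Real.exp (δ * (K * l)) ≤ Real.exp (c * K) := by
      apply Real.exp_le_exp.mpr
      have : δ * (K * l) = c * K / 2 := by rw [hδ]; field_simp
      rw [this]
      have : 0 ≤ c * K := by positivity
      linarith
    have e3 : 1 / δ + l = (2 / c + 1) * l := by rw [hδ]; field_simp
    rw [e3] at h
    have h5 : Real.exp (P (1 + 1 / l) + X χ (1 + 1 / l)) ≤ B * l * lam := by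
      refine h.trans ?_
      have : B * l * lam = K * Real.exp (c * K) * ((2 / c + 1) * l) * lam := by rw [hB]; ring
      rw [this]
      gcongr
    have h6 := Real.log_le_log (Real.exp_pos _) h5
    rw [Real.log_exp, Real.log_mul (by positivity) hlampos.ne', Real.log_mul (by positivity) hl0.ne'] at h6
    rw [hlam, Complex.ofReal_re, ← Real.le_log_iff_exp_le hlampos]
    linarith [q1.1]

/-! ### Part E: moments over the group of quadratic characters -/

open Classical in
/-- Characters modulo `N` with `χ² = 1`. -/
def G (N : ℕ) [NeZero N] : Finset (DirichletCharacter ℂ N) :=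
  (Set.toFinite {χ : DirichletCharacter ℂ N | χ ^ 2 = 1}).toFinset

lemma mem_G {N : ℕ} [NeZero N] {χ : DirichletCharacter ℂ N} : χ ∈ G N ↔ χ ^ 2 = 1 := by
  simp [G]

lemma one_mem_G (N : ℕ) [NeZero N] : (1 : DirichletCharacter ℂ N) ∈ G N := by
  rw [mem_G, one_pow]

lemma G_card_pos (N : ℕ) [NeZero N] : 0 < (G N).card := Finset.card_pos.mpr ⟨1, one_mem_G N⟩

/-- Sum of character values. -/
def A (N : ℕ) [NeZero N] (a : ZMod N) : ℝ := ∑ χ ∈ G N, (χ a).re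

lemma A_cases {N : ℕ} [NeZero N] (a : ZMod N) : (∀ χ ∈ G N, χ a = 1) ∨ A N a = 0 := by
  by_cases h : ∀ χ ∈ G N, χ a = 1
  · exact Or.inl h
  · right
    push Not at h
    obtain ⟨χ₀, hχ₀, hne⟩ := h
    have h2 := mem_G.mp hχ₀
    rcases MulChar.isQuadratic_iff_sq_eq_one.mpr h2 a with h | h | h
    · have hu : ¬ IsUnit a := fun hu => (hu.map χ₀).ne_zero h
      refine Finset.sum_eq_zero fun χ _ => ?_
      rw [MulChar.map_nonunit χ hu, Complex.zero_re]
    · exact absurd h hne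
    · have e : A N a = ∑ χ ∈ G N, ((χ₀ * χ) a).re := by
        rw [A]
        refine Finset.sum_nbij' (fun χ => χ₀ * χ) (fun χ => χ₀ * χ) ?_ ?_ ?_ ?_ ?_
        · intro χ hχ
          rw [mem_G] at hχ ⊢
          rw [mul_pow, h2, hχ, one_mul]
        · intro χ hχ
          rw [mem_G] at hχ ⊢
          rw [mul_pow, h2, hχ, one_mul]
        · intro χ _
          rw [← mul_assoc, ← pow_two, h2, one_mul]
        · intro χ _
          rw [← mul_assoc, ← pow_two, h2, one_mul]
        · intro χ _
          rw [← mul_assoc, ← pow_two, h2, one_mul]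
      have e2 : ∑ χ ∈ G N, ((χ₀ * χ) a).re = - A N a := by
        rw [A, ← Finset.sum_neg_distrib]
        refine Finset.sum_congr rfl fun χ _ => ?_
        rw [MulChar.mul_apply, h]
        simp
      linarith

lemma A_nonneg {N : ℕ} [NeZero N] (a : ZMod N) : 0 ≤ A N a := by
  rcases A_cases a with h | h
  · refine Finset.sum_nonneg fun χ hχ => ?_
    rw [h χ hχ]
    simp
  · exact h.ge

lemma A_le_card {N : ℕ} [NeZero N] (a : ZMod N) : A N a ≤ (G N).card := by
  rw [A, Finset.card_eq_sum_ones, Nat.cast_sum]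
  refine Finset.sum_le_sum fun χ _ => ?_
  simpa using (le_abs_self _).trans (chi_abs χ a)

lemma A_mono {q Q : ℕ} [NeZero q] [NeZero Q] (hQ : Q ∣ q) (n : ℕ) :
    A q n / (G q).card ≤ A Q n / (G Q).card := by
  rcases A_cases (N := q) (n : ZMod q) with h | h
  · have hQ1 : A Q n = (G Q).card := by
      rw [A, Finset.card_eq_sum_ones, Nat.cast_sum]
      refine Finset.sum_congr rfl fun ψ hψ => ?_
      have hu : IsUnit (n : ZMod q) := by
        by_contra hu
        have := h 1 (one_mem_G q)
        rw [MulChar.map_nonunit _ hu] at this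
        exact zero_ne_one this
      have h1 := h (DirichletCharacter.changeLevel hQ ψ) (by
        rw [mem_G] at hψ ⊢
        rw [← map_pow, hψ, map_one])
      have h2 := DirichletCharacter.changeLevel_eq_cast_of_dvd ψ hQ hu.unit
      simp only [IsUnit.unit_spec, ZMod.cast_natCast hQ] at h2
      rw [← h2, h1]
      simp
    rw [hQ1, div_self (by exact_mod_cast (G_card_pos Q).ne')]
    exact div_le_one_of_le₀ (A_le_card _) (Nat.cast_nonneg _)
  · rw [h, zero_div]
    exact div_nonneg (A_nonneg _) (Nat.cast_nonneg _)

lemma sum_X {N : ℕ} [NeZero N] {σ : ℝ} (hσ : 1 < σ) :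
    HasSum (fun n : ℕ => wt σ n * A N n) (∑ χ ∈ G N, X χ σ) := by
  have h := hasSum_sum (s := G N) fun χ _ => (X_summable χ hσ).hasSum
  have e : (fun n : ℕ => wt σ n * A N n) = fun n : ℕ => ∑ χ ∈ G N, wt σ n * (χ n).re := by
    funext n
    rw [A, Finset.mul_sum]
  rw [e]
  exact h

lemma sum_X_nonneg {N : ℕ} [NeZero N] {σ : ℝ} (hσ : 1 < σ) : 0 ≤ ∑ χ ∈ G N, X χ σ :=
  (sum_X hσ).nonneg fun n => mul_nonneg (wt_nonneg σ n) (A_nonneg _)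

lemma sum_X_anti {N : ℕ} [NeZero N] {σ τ : ℝ} (hτ : 1 < τ) (h : τ ≤ σ) :
    ∑ χ ∈ G N, X χ σ ≤ ∑ χ ∈ G N, X χ τ :=
  hasSum_le (fun n => mul_le_mul_of_nonneg_right (wt_anti h n) (A_nonneg _))
    (sum_X (by linarith)) (sum_X hτ)

lemma sum_X_sq {N : ℕ} [NeZero N] {σ : ℝ} (hσ : 1 < σ) :
    HasSum (fun z : ℕ × ℕ => wt σ z.1 * wt σ z.2 * A N ((z.1 * z.2 : ℕ) : ZMod N))
      (∑ χ ∈ G N, X χ σ ^ 2) := by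
  have h := hasSum_sum (s := G N) (f := fun χ (z : ℕ × ℕ) =>
      (wt σ z.1 * (χ z.1).re) * (wt σ z.2 * (χ z.2).re)) (a := fun χ => X χ σ ^ 2) fun χ _ => by
    have hn : Summable fun n : ℕ => ‖wt σ n * (χ n).re‖ :=
      Summable.of_nonneg_of_le (fun _ => norm_nonneg _) (X_summand_abs χ σ) (wt_summable hσ)
    have h1 := (summable_mul_of_summable_norm hn hn).hasSum
    rw [← tsum_mul_tsum_of_summable_norm hn hn, ← pow_two] at h1
    exact h1
  have e : (fun z : ℕ × ℕ => wt σ z.1 * wt σ z.2 * A N ((z.1 * z.2 : ℕ) : ZMod N)) =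
      fun z : ℕ × ℕ => ∑ χ ∈ G N, (wt σ z.1 * (χ z.1).re) * (wt σ z.2 * (χ z.2).re) := by
    funext z
    rw [A, Finset.mul_sum]
    refine Finset.sum_congr rfl fun χ hχ => ?_
    rw [Nat.cast_mul, map_mul, chi_real (mem_G.mp hχ) z.1, chi_real (mem_G.mp hχ) z.2,
      ← Complex.ofReal_mul]
    simp only [Complex.ofReal_re]
    ring
  rw [e]
  exact h

lemma sum_X_sq_mono {q Q : ℕ} [NeZero q] [NeZero Q] (hQ : Q ∣ q) {σ : ℝ} (hσ : 1 < σ) :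
    (∑ χ ∈ G q, X χ σ ^ 2) / (G q).card ≤ (∑ χ ∈ G Q, X χ σ ^ 2) / (G Q).card := by
  refine hasSum_le (fun z => ?_) ((sum_X_sq (N := q) hσ).div_const _)
    ((sum_X_sq (N := Q) hσ).div_const _)
  rw [mul_div_assoc, mul_div_assoc]
  exact mul_le_mul_of_nonneg_left (A_mono hQ _) (mul_nonneg (wt_nonneg _ _) (wt_nonneg _ _))

/-- An `L¹` to `L²` bound from a one-sided bound. -/
lemma sum_X_sq_le {N : ℕ} [NeZero N] {σ U : ℝ} (hσ : 1 < σ) (hU : 0 ≤ U)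
    (h : ∀ χ ∈ G N, χ ≠ 1 → X χ σ ≤ U) :
    (∑ χ ∈ G N, X χ σ ^ 2) / (G N).card ≤ 2 * P σ * (U + P σ / (G N).card) := by
  classical
  have hc : (0 : ℝ) < (G N).card := by exact_mod_cast G_card_pos N
  have hP : 0 ≤ P σ := (abs_nonneg _).trans (X_abs_le (1 : DirichletCharacter ℂ N) hσ)
  have h1 : ∀ χ ∈ G N, X χ σ ^ 2 ≤ P σ * (2 * (if χ = 1 then U + P σ else U) - X χ σ) := by
    intro χ hχ
    have a := X_abs_le χ hσ
    have b := abs_le.mp a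
    have c : |X χ σ| ≤ 2 * (if χ = 1 then U + P σ else U) - X χ σ := by
      rw [abs_le]
      split_ifs with h1
      · constructor <;> linarith
      · have := h χ hχ h1
        constructor <;> linarith
    calc X χ σ ^ 2 = |X χ σ| * |X χ σ| := by rw [← pow_two, sq_abs]
      _ ≤ P σ * _ := by
        apply mul_le_mul a c (abs_nonneg _) hP
  have h2 : ∑ χ ∈ G N, X χ σ ^ 2 ≤ P σ * (2 * ((G N).card * U + P σ)) := by
    refine (Finset.sum_le_sum h1).trans ?_
    rw [← Finset.mul_sum, Finset.sum_sub_distrib, ← Finset.mul_sum]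
    refine mul_le_mul_of_nonneg_left ?_ hP
    have e : ∑ χ ∈ G N, (if χ = 1 then U + P σ else U) = (G N).card * U + P σ := by
      have : ∀ χ : DirichletCharacter ℂ N, (if χ = 1 then U + P σ else U) = U + if χ = 1 then P σ else 0 := by
        intro χ; split_ifs <;> ring
      simp_rw [this]
      rw [Finset.sum_add_distrib, Finset.sum_ite_eq' (G N) 1, if_pos (one_mem_G N)]
      simp
    rw [e]
    linarith [sum_X_nonneg (N := N) hσ]
  rw [div_le_iff₀ hc]
  refine h2.trans (le_of_eq ?_)
  field_simp

/-! ### Part F: few exceptional characters -/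

lemma X_diff_le {N : ℕ} (χ : DirichletCharacter ℂ N) {σ τ : ℝ} (hτ : 1 < τ) (h : τ ≤ σ) :
    X χ τ - X χ σ ≤ P τ - P σ := by
  have hσ : 1 < σ := by linarith
  refine hasSum_le (fun n => ?_) ((X_summable χ hτ).hasSum.sub (X_summable χ hσ).hasSum)
    ((wt_summable hτ).hasSum.sub (wt_summable hσ).hasSum)
  rw [← sub_mul]
  refine mul_le_of_le_one_right ?_ ((le_abs_self _).trans (chi_abs χ _))
  linarith [wt_anti h n]

theorem V_large : ∃ c₁ : ℝ, 0 < c₁ ∧ ∀ c : ℝ, 0 < c → c ≤ c₁ → ∀ (q : ℕ) [NeZero q],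
    1 ≤ Real.log q → ∀ V : Finset (DirichletCharacter ℂ q),
    (∀ χ, χ ∈ V ↔ χ ^ 2 = 1 ∧ χ ≠ 1 ∧
      ¬∃ β : ℝ, χ.LFunction β = 0 ∧ 1 - c / Real.log q < β) →
    V.Nonempty → ((G q).card : ℝ) ≤ 5 * V.card := by
  classical
  obtain ⟨κ, hκ, hP, hA, -⟩ := analytic_log
  set T := 4 * κ with hT
  set a := Real.exp (-T) with ha
  have ha0 : 0 < a := Real.exp_pos _
  have ha1 : a ≤ 1 := Real.exp_le_one_iff.mpr (by linarith)
  refine ⟨min (a / 2) (1 / 20), by positivity, ?_⟩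
  intro c hc hc1 q _ hq V hV hne
  have hca : c ≤ a / 2 := hc1.trans (min_le_left _ _)
  have hc20 : c ≤ 1 / 20 := hc1.trans (min_le_right _ _)
  set l := 2 * Real.log q with hl
  have hl2 : 2 ≤ l := by linarith
  have hl0 : 0 < l := by linarith
  have hq0 : (0 : ℝ) < q := by exact_mod_cast NeZero.pos q
  have hql : (q : ℝ) ≤ Real.exp l := by
    calc (q : ℝ) = Real.exp (Real.log q) := (Real.exp_log hq0).symm
      _ ≤ _ := Real.exp_le_exp.mpr (by linarith)
  set σ := 1 + 1 / l with hσ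
  set τ := 1 + a / l with hτ
  have hτ1 : 1 < τ := by have : 0 < a / l := by positivity
                         linarith
  have hτσ : τ ≤ σ := by rw [hτ, hσ]; gcongr
  have hli : 1 / l ≤ 1 / 2 := by
    apply one_div_le_one_div_of_le <;> linarith
  -- pointwise bounds
  have hy : ∀ χ ∈ G q, X χ τ - X χ σ ≤
      κ + (if χ = 1 then T + κ else 0) - (if χ = 1 ∨ χ ∈ V then 0 else T) := by
    intro χ hχ
    have hχ2 := mem_G.mp hχ
    by_cases h1 : χ = 1
    · rw [if_pos h1, if_pos (Or.inl h1)]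
      have p1 := abs_le.mp (hP τ hτ1 (by linarith))
      have p2 := abs_le.mp (hP σ (by linarith) (by linarith))
      have e1 : Real.log (τ - 1) = -T - Real.log l := by
        rw [hτ, add_sub_cancel_left, Real.log_div ha0.ne' hl0.ne', ha, Real.log_exp]
      have e2 : Real.log (σ - 1) = - Real.log l := by
        rw [hσ, add_sub_cancel_left, one_div, Real.log_inv]
      rw [e1] at p1
      rw [e2] at p2
      have := X_diff_le χ hτ1 hτσ
      linarith [p1.2, p2.1]
    · rw [if_neg h1]
      obtain ⟨hx, hz⟩ := hA q χ hχ2 h1 l hl2 hql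
      by_cases h2 : χ ∈ V
      · rw [if_pos (Or.inr h2)]
        have := hx σ τ hτ1 hτσ le_rfl
        linarith
      · rw [if_neg (not_or.mpr ⟨h1, h2⟩)]
        rw [hV] at h2
        push Not at h2
        obtain ⟨β, hβ, hβ2⟩ := h2 hχ2 h1
        have hβ1 : β < 1 := by
          by_contra hcon
          push Not at hcon
          exact DirichletCharacter.LFunction_ne_zero_of_one_le_re χ (Or.inl h1)
            (by simpa using hcon) hβ
        have hcl : c / Real.log q = 2 * c / l := by
          rw [hl]; field_simp
        have hδ : 1 - β ≤ a / l := by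
          rw [hcl] at hβ2
          have : 2 * c / l ≤ a / l := by gcongr; linarith
          linarith
        have hδ2 : 1 - β ≤ 1 / 20 := by
          have : c / Real.log q ≤ c := div_le_self hc.le hq
          linarith
        have h := hz (1 - β) τ (by linarith) hδ2 (by rw [sub_sub_cancel]; exact hβ)
          (by rw [hτ, add_sub_cancel_left]; exact hδ) hτσ
        have e1 : Real.log ((τ - 1) * l) = -T := by
          rw [hτ, add_sub_cancel_left, div_mul_cancel₀ _ hl0.ne', ha, Real.log_exp]
        rw [e1] at h
        linarith
  have hsum : 0 ≤ ∑ χ ∈ G q, (X χ τ - X χ σ) := by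
    rw [Finset.sum_sub_distrib]
    linarith [sum_X_anti (N := q) hτ1 hτσ]
  have hle := hsum.trans (Finset.sum_le_sum hy)
  rw [Finset.sum_sub_distrib, Finset.sum_add_distrib, Finset.sum_ite_eq' (G q) 1,
    if_pos (one_mem_G q), Finset.sum_const, nsmul_eq_mul] at hle
  have hVG : insert 1 V ⊆ G q := by
    intro χ hχ
    rcases Finset.mem_insert.mp hχ with rfl | h
    · exact one_mem_G q
    · exact mem_G.mpr ((hV χ).mp h).1
  have h1V : (1 : DirichletCharacter ℂ q) ∉ V := fun h => ((hV 1).mp h).2.1 rfl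
  have e : ∑ χ ∈ G q, (if χ = 1 ∨ χ ∈ V then 0 else T) = ((G q).card - (V.card + 1)) * T := by
    have h1 : ∀ χ : DirichletCharacter ℂ q, (if χ = 1 ∨ χ ∈ V then (0 : ℝ) else T) =
        T - if χ ∈ insert 1 V then T else 0 := by
      intro χ
      simp only [Finset.mem_insert]
      split_ifs <;> ring
    simp_rw [h1]
    rw [Finset.sum_sub_distrib, Finset.sum_ite_mem, Finset.inter_eq_right.mpr hVG, Finset.sum_const,
      Finset.sum_const, Finset.card_insert_of_notMem h1V]
    simp only [nsmul_eq_mul]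
    push_cast
    ring
  rw [e] at hle
  have hV1 : (1 : ℝ) ≤ V.card := by exact_mod_cast hne.card_pos
  have h3 : κ * (3 * (G q).card) ≤ κ * (4 * V.card + 9) := by
    rw [hT] at hle
    linarith
  have h4 := le_of_mul_le_mul_left h3 (by linarith)
  linarith

/-! ### Part G: the number of quadratic characters modulo a product of odd primes -/

lemma G_card_ge (N : ℕ) [NeZero N] : Nat.card {x : ZMod N // x ^ 2 = 1} ≤ (G N).card := by
  obtain ⟨e⟩ := DirichletCharacter.mulEquiv_units ℂ N
  have h1 : ∀ x : {x : ZMod N // x ^ 2 = 1}, x.1 * x.1 = 1 := fun x => by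
    rw [← pow_two]; exact x.2
  have hsub : ∀ x : {x : ZMod N // x ^ 2 = 1},
      e.symm ⟨x.1, x.1, h1 x, h1 x⟩ ∈ G N := fun x => by
    rw [mem_G, ← map_pow]
    have : (⟨x.1, x.1, h1 x, h1 x⟩ : (ZMod N)ˣ) ^ 2 = 1 := by
      ext
      exact x.2
    rw [this, map_one]
  rw [← Nat.card_eq_finsetCard (G N)]
  refine Nat.card_le_card_of_injective (fun x => ⟨_, hsub x⟩) ?_
  intro x y hxy
  have := e.symm.injective (Subtype.ext_iff.mp hxy)
  exact Subtype.ext (congrArg Units.val this)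

lemma g_mul {m n : ℕ} (h : m.Coprime n) [NeZero m] [NeZero n] :
    Nat.card {x : ZMod (m * n) // x ^ 2 = 1} =
      Nat.card {x : ZMod m // x ^ 2 = 1} * Nat.card {x : ZMod n // x ^ 2 = 1} := by
  rw [← Nat.card_prod]
  refine Nat.card_congr ?_
  refine ((ZMod.chineseRemainder h).toEquiv.subtypeEquiv (q := fun x => x.1 ^ 2 = 1 ∧ x.2 ^ 2 = 1)
    fun x => ?_).trans
      (Equiv.subtypeProdEquivProd (p := fun x : ZMod m => x ^ 2 = 1) (q := fun x : ZMod n => x ^ 2 = 1))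
  rw [← (ZMod.chineseRemainder h).injective.eq_iff, map_pow, map_one, Prod.ext_iff]
  rfl

lemma g_prime {p : ℕ} (hp : p.Prime) (h2 : p ≠ 2) : 2 ≤ Nat.card {x : ZMod p // x ^ 2 = 1} := by
  have := Fact.mk hp
  have : Fact (2 < p) := ⟨lt_of_le_of_ne hp.two_le h2.symm⟩
  have : Nontrivial {x : ZMod p // x ^ 2 = 1} := by
    refine ⟨⟨1, by simp⟩, ⟨-1, by simp⟩, ?_⟩
    intro h
    exact ZMod.neg_one_ne_one (n := p) (Subtype.ext_iff.mp h).symm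
  exact Finite.one_lt_card

lemma g_prod (S : Finset ℕ) (hS : ∀ p ∈ S, p.Prime ∧ p ≠ 2) :
    2 ^ S.card ≤ Nat.card {x : ZMod (∏ p ∈ S, p) // x ^ 2 = 1} := by
  classical
  induction S using Finset.induction_on with
  | empty =>
    change 1 ≤ Nat.card {x : ZMod 1 // x ^ 2 = 1}
    have : Nonempty {x : ZMod 1 // x ^ 2 = 1} := ⟨⟨1, by simp⟩⟩
    exact Nat.card_pos
  | insert p S hp ih =>
    have hSp := hS p (Finset.mem_insert_self p S)
    have hS' : ∀ p ∈ S, p.Prime ∧ p ≠ 2 := fun r hr => hS r (Finset.mem_insert_of_mem hr)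
    have hco : p.Coprime (∏ r ∈ S, r) := by
      refine Nat.Coprime.prod_right fun r hr => ?_
      rw [Nat.coprime_primes hSp.1 (hS' r hr).1]
      rintro rfl
      exact hp hr
    have : NeZero p := ⟨hSp.1.ne_zero⟩
    have : NeZero (∏ r ∈ S, r) := ⟨Finset.prod_ne_zero_iff.mpr fun r hr => (hS' r hr).1.ne_zero⟩
    rw [Finset.prod_insert hp, g_mul hco, Finset.card_insert_of_notMem hp, pow_succ, mul_comm]
    exact Nat.mul_le_mul (g_prime hSp.1 hSp.2) (ih hS')

/-! ### Part H: the second moment and Chebyshev's inequality -/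

/-- Number of primes `p ≤ Y` dividing `q`. -/
def om (Y : ℝ) (q : ℕ) : ℕ := by
  classical exact (q.primeFactors.filter (fun p : ℕ => (p : ℝ) ≤ Y)).card

lemma exists_Q (q : ℕ) [NeZero q] (Y : ℝ) (hY : 3 ≤ Y) : ∃ (Q : ℕ) (_ : NeZero Q), Q ∣ q ∧
    Real.log Q ≤ om Y q * Real.log Y ∧ 1 / ((G Q).card : ℝ) ≤ 2 * 2 ^ (-(om Y q : ℝ)) := by
  classical
  set S' := q.primeFactors.filter (fun p : ℕ => (p : ℝ) ≤ Y) with hS'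
  have hom : om Y q = S'.card := by
    rw [om, hS']
  set S := S'.erase 2 with hS
  have hSp : ∀ p ∈ S, p.Prime ∧ p ≠ 2 := by
    intro p hp
    have h1 := Finset.mem_erase.mp hp
    exact ⟨Nat.prime_of_mem_primeFactors (Finset.mem_filter.mp h1.2).1, h1.1⟩
  have hne : NeZero (∏ p ∈ S, p) :=
    ⟨Finset.prod_ne_zero_iff.mpr fun r hr => (hSp r hr).1.ne_zero⟩
  have hcard : S'.card ≤ S.card + 1 := by
    have : S'.card - 1 ≤ S.card := Finset.pred_card_le_card_erase
    omega
  refine ⟨∏ p ∈ S, p, hne, ?_, ?_, ?_⟩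
  · refine dvd_trans ?_ (Nat.prod_primeFactors_dvd q)
    exact Finset.prod_dvd_prod_of_subset _ _ _
      ((Finset.erase_subset _ _).trans (Finset.filter_subset _ _))
  · rw [Nat.cast_prod, Real.log_prod (fun p hp => by exact_mod_cast (hSp p hp).1.ne_zero)]
    have hlY : 0 ≤ Real.log Y := Real.log_nonneg (by linarith)
    calc ∑ p ∈ S, Real.log p ≤ ∑ p ∈ S, Real.log Y := by
          refine Finset.sum_le_sum fun p hp => ?_
          have h1 := (Finset.mem_filter.mp (Finset.mem_erase.mp hp).2).2
          exact Real.log_le_log (by exact_mod_cast (hSp p hp).1.pos) h1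
      _ = S.card * Real.log Y := by rw [Finset.sum_const, nsmul_eq_mul]
      _ ≤ _ := by
          rw [hom]
          gcongr
          exact Finset.erase_subset _ _
  · have h1 := (g_prod S hSp).trans (G_card_ge (∏ p ∈ S, p))
    have h2 : (2 : ℝ) ^ S.card ≤ (G (∏ p ∈ S, p)).card := by exact_mod_cast h1
    have h3 : (2 : ℝ) ^ S'.card ≤ 2 * 2 ^ S.card := by
      rw [← pow_succ']
      exact pow_le_pow_right₀ (by norm_num) hcard
    rw [hom, Real.rpow_neg (by norm_num), Real.rpow_natCast, ← div_eq_mul_inv,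
      div_le_div_iff₀ (by exact_mod_cast G_card_pos _) (by positivity)]
    linarith

set_option maxHeartbeats 2000000 in
theorem core : ∃ c C : ℝ, 0 < c ∧ 0 < C ∧ ∀ (q : ℕ) [NeZero q], 16 ≤ q →
    ∀ Y : ℝ, 3 ≤ Y → ∀ k : ℝ, 1 ≤ k → ∀ V : Finset (DirichletCharacter ℂ q),
      (∀ χ, χ ∈ V ↔ χ ^ 2 = 1 ∧ χ ≠ 1 ∧
        ¬∃ β : ℝ, χ.LFunction β = 0 ∧ 1 - c / Real.log q < β) →
      (1 - 1 / k ^ 2) * V.card ≤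
        (Nat.card {χ : DirichletCharacter ℂ q // χ ∈ V ∧
          Real.log q ^ (-(k * C * Real.sqrt
              ((Real.log ((om Y q : ℝ) + 2) + Real.log (Real.log Y)) /
                  Real.log (Real.log q) +
                2 ^ (-(om Y q : ℝ))))) ≤ (χ.LFunction 1).re} : ℝ) := by
  classical
  obtain ⟨κ, hκ, hP, hA, c₀, hc₀, hc⟩ := analytic_log
  obtain ⟨c₁, hc₁, hVL⟩ := V_large
  set c := min c₀ c₁ with hcdef
  have hcpos : 0 < c := lt_min hc₀ hc₁
  obtain ⟨κ', hκ', hL1⟩ := hc c hcpos (min_le_left _ _)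
  set C := 4 * κ' + 45 * κ with hC
  have hCpos : 0 < C := by linarith
  refine ⟨c, C, hcpos, hCpos, ?_⟩
  intro q _ hq Y hY k hk V hV
  -- numerical facts
  have hq16 : (16 : ℝ) ≤ q := by exact_mod_cast hq
  have hq0 : (0 : ℝ) < q := by linarith
  have hl2 : 0.69 < Real.log 2 := by linarith [Real.log_two_gt_d9]
  have hlogq : 2 ≤ Real.log q := by
    have h1 : Real.log 16 ≤ Real.log q := Real.log_le_log (by norm_num) hq16
    have h2 : Real.log 16 = 4 * Real.log 2 := by
      rw [show (16 : ℝ) = 2 ^ 4 by norm_num, Real.log_pow]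
      norm_num
    linarith
  set LL := Real.log (Real.log q) with hLL
  have hLL2 : 1 / 2 ≤ LL := by
    have : Real.log 2 ≤ LL := Real.log_le_log (by norm_num) hlogq
    linarith
  have hlogY : 1 ≤ Real.log Y := by
    rw [Real.le_log_iff_exp_le (by linarith)]
    linarith [Real.exp_one_lt_d9]
  set w := om Y q with hw
  set B := Real.log ((w : ℝ) + 2) + Real.log (Real.log Y) with hB
  have hw0 : (0 : ℝ) ≤ w := Nat.cast_nonneg w
  have hB2 : 1 / 2 ≤ B := by
    have h1 : Real.log 2 ≤ Real.log ((w : ℝ) + 2) := Real.log_le_log (by norm_num) (by linarith)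
    have h2 : 0 ≤ Real.log (Real.log Y) := Real.log_nonneg hlogY
    linarith
  set t : ℝ := 2 ^ (-(w : ℝ)) with ht
  have ht0 : 0 < t := Real.rpow_pos_of_pos (by norm_num) _
  set E := B / LL + t with hE
  have hLL0 : 0 < LL := by linarith
  have hE0 : 0 < E := by
    have : 0 < B / LL := div_pos (by linarith) hLL0
    linarith
  have hELL : LL ^ 2 * E = LL * (B + LL * t) := by rw [hE]; field_simp
  set l := 2 * Real.log q with hl
  have hl4 : 2 ≤ l := by linarith
  have hl0 : 0 < l := by linarith
  have hli : 1 / l ≤ 1 / 2 := by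
    apply one_div_le_one_div_of_le <;> linarith
  have hli0 : 0 < 1 / l := by positivity
  have hql : (q : ℝ) ≤ Real.exp l := by
    calc (q : ℝ) = Real.exp (Real.log q) := (Real.exp_log hq0).symm
      _ ≤ _ := Real.exp_le_exp.mpr (by linarith)
  set σ := 1 + 1 / l with hσ
  have hσ1 : 1 < σ := by linarith
  have hPσ : P σ ≤ 5 * κ * LL := by
    have p := (abs_le.mp (hP σ hσ1 (by linarith))).2
    have e : Real.log (σ - 1) = -(Real.log 2 + LL) := by
      rw [hσ, add_sub_cancel_left, one_div, Real.log_inv, hl, Real.log_mul (by norm_num) (by linarith)]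
    rw [e] at p
    have : Real.log 2 ≤ 1 := by linarith [Real.log_two_lt_d9]
    have h4 : κ * (1 / 2) ≤ κ * LL := by gcongr
    have h5 : 1 * LL ≤ κ * LL := by gcongr
    linarith
  have hP0 : 0 ≤ P σ := (abs_nonneg _).trans (X_abs_le (1 : DirichletCharacter ℂ q) hσ1)
  -- second moment
  have hmom : ∑ χ ∈ G q, X χ σ ^ 2 ≤ 100 * κ ^ 2 * (LL ^ 2 * E) * (G q).card := by
    obtain ⟨Q, hQ0, hQq, hlogQ, hGQ⟩ := exists_Q q Y hY
    have hQpos : (0 : ℝ) < Q := by exact_mod_cast NeZero.pos Q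
    have hQle : Real.log Q ≤ Real.log q :=
      Real.log_le_log hQpos (by exact_mod_cast Nat.le_of_dvd (NeZero.pos q) hQq)
    set m := max 2 (Real.log Q) with hm
    have hm2 : 2 ≤ m := le_max_left _ _
    have hml : m ≤ l := max_le hl4 (by linarith)
    have hmQ : (Q : ℝ) ≤ Real.exp m := by
      calc (Q : ℝ) = Real.exp (Real.log Q) := (Real.exp_log hQpos).symm
        _ ≤ _ := Real.exp_le_exp.mpr (le_max_right _ _)
    have hmB : Real.log m ≤ B := by
      rw [hB, ← Real.log_mul (by linarith) (by linarith)]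
      refine Real.log_le_log (by linarith) ?_
      refine max_le ?_ ?_ <;> nlinarith
    have hm1 : 1 / m ≤ 1 / 2 := by
      apply one_div_le_one_div_of_le <;> linarith
    have hm0 : 0 < 1 / m := by positivity
    have hlm : σ ≤ 1 + 1 / m := by
      rw [hσ]
      gcongr
    have hU : ∀ ψ ∈ G Q, ψ ≠ 1 → X ψ σ ≤ 5 * κ * B := by
      intro ψ hψ hψ1
      have h1 := (hA Q ψ (mem_G.mp hψ) hψ1 m hm2 hmQ).1 (1 + 1 / m) σ hσ1 hlm le_rfl
      have h2 := (le_abs_self _).trans (X_abs_le ψ (σ := 1 + 1 / m) (by linarith))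
      have h3 := (abs_le.mp (hP (1 + 1 / m) (by linarith) (by linarith))).2
      have e : Real.log (1 + 1 / m - 1) = -Real.log m := by
        rw [add_sub_cancel_left, one_div, Real.log_inv]
      rw [e] at h3
      have h4 : κ * (1 / 2) ≤ κ * B := by gcongr
      have h5 : 1 * B ≤ κ * B := by gcongr
      linarith
    have h1 := sum_X_sq_le hσ1 (by positivity) hU
    have h2 := (sum_X_sq_mono hQq hσ1).trans h1
    rw [div_le_iff₀ (by exact_mod_cast G_card_pos q)] at h2
    refine h2.trans ?_
    refine mul_le_mul_of_nonneg_right ?_ (Nat.cast_nonneg _)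
    rw [hELL]
    have h3 : P σ / (G Q).card ≤ 5 * κ * LL * (2 * t) := by
      rw [div_eq_mul_one_div]
      exact mul_le_mul hPσ hGQ (by positivity) (by positivity)
    have hBt : 0 ≤ 5 * κ * B := by positivity
    calc 2 * P σ * (5 * κ * B + P σ / (G Q).card)
        ≤ 2 * (5 * κ * LL) * (5 * κ * B + 5 * κ * LL * (2 * t)) := by
          apply mul_le_mul
          · linarith
          · linarith
          · positivity
          · positivity
      _ = 50 * κ ^ 2 * LL * B + 100 * κ ^ 2 * LL * (LL * t) := by ring
      _ ≤ 100 * κ ^ 2 * LL * B + 100 * κ ^ 2 * LL * (LL * t) := by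
          have : 0 ≤ κ ^ 2 * LL * B := by positivity
          linarith
      _ = _ := by ring
  -- split V
  set good : DirichletCharacter ℂ q → Prop := fun χ =>
    Real.log q ^ (-(k * C * Real.sqrt E)) ≤ (χ.LFunction 1).re with hgood
  have hcardgood : Nat.card {χ : DirichletCharacter ℂ q // χ ∈ V ∧ good χ} =
      (V.filter good).card := by
    rw [← Nat.card_eq_finsetCard]
    exact Nat.card_congr (Equiv.subtypeEquivRight fun χ => by rw [Finset.mem_filter])
  change (1 - 1 / k ^ 2) * (V.card : ℝ) ≤
    (Nat.card {χ : DirichletCharacter ℂ q // χ ∈ V ∧ good χ} : ℝ)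
  rw [hcardgood]
  have hsplit : ((V.filter good).card : ℝ) + (V.filter (fun χ => ¬ good χ)).card = V.card := by
    exact_mod_cast Finset.card_filter_add_card_filter_not (s := V) good
  rcases V.eq_empty_or_nonempty with hVe | hVne
  · rw [hVe]; simp
  have hGV := hVL c hcpos (min_le_right _ _) q (by linarith) V hV hVne
  set W := V.filter (fun χ => ¬ good χ) with hW
  set R := Real.sqrt E * LL with hR
  have hR0 : 0 < R := mul_pos (Real.sqrt_pos.mpr hE0) hLL0
  have hRsq : R ^ 2 = LL ^ 2 * E := by
    rw [hR, mul_pow, Real.sq_sqrt hE0.le]; ring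
  have hRhalf : 1 / 2 ≤ R := by
    have : (1 / 2 : ℝ) ^ 2 ≤ R ^ 2 := by
      rw [hRsq, hELL]
      have : 0 ≤ LL * t := by positivity
      nlinarith
    exact le_of_sq_le_sq this hR0.le
  have hbad : ∀ χ ∈ W, (k * C * R / 2) ^ 2 ≤ X χ σ ^ 2 := by
    intro χ hχ
    obtain ⟨hχV, hχb⟩ := Finset.mem_filter.mp hχ
    obtain ⟨h2, h1, hz⟩ := (hV χ).mp hχV
    have hL := hL1 q χ h2 h1 l hl4 hql (fun β hβ h0 => hz ⟨β, h0, by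
      have : c / l ≤ c / Real.log q := by
        gcongr
        linarith
      linarith⟩)
    rw [hgood] at hχb
    push Not at hχb
    have h3 := hL.trans_lt hχb
    rw [Real.rpow_def_of_pos (by linarith), Real.exp_lt_exp] at h3
    have h4 : LL * (-(k * C * Real.sqrt E)) = -(k * C * R) := by rw [hR]; ring
    rw [h4] at h3
    have h5 : κ' ≤ k * C * R / 2 := by
      have h6 : C * (1 / 2) ≤ k * C * R := by
        apply mul_le_mul _ hRhalf (by norm_num) (by positivity)
        exact le_mul_of_one_le_left hCpos.le hk
      linarith
    have h6 : k * C * R / 2 ≤ - X χ σ := by linarith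
    have h7 : 0 ≤ k * C * R / 2 := by positivity
    nlinarith
  have hsumW : W.card * (k * C * R / 2) ^ 2 ≤ 100 * κ ^ 2 * (LL ^ 2 * E) * (G q).card := by
    refine le_trans ?_ hmom
    rw [← nsmul_eq_mul]
    refine (Finset.card_nsmul_le_sum W _ _ hbad).trans ?_
    refine Finset.sum_le_sum_of_subset_of_nonneg ?_ fun χ _ _ => sq_nonneg _
    intro χ hχ
    exact mem_G.mpr ((hV χ).mp (Finset.mem_filter.mp hχ).1).1
  rw [← hRsq] at hsumW
  have hW1 : W.card * (k ^ 2 * C ^ 2) ≤ 400 * κ ^ 2 * (5 * V.card) := by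
    have a1 : R ^ 2 * (W.card * (k ^ 2 * C ^ 2)) ≤ R ^ 2 * (400 * κ ^ 2 * (G q).card) := by
      nlinarith
    have a2 := le_of_mul_le_mul_left a1 (by positivity)
    refine a2.trans ?_
    gcongr
  have hCsq : 2000 * κ ^ 2 ≤ C ^ 2 := by
    have : 45 * κ ≤ C := by linarith
    nlinarith
  have hW2 : (W.card : ℝ) ≤ 1 / k ^ 2 * V.card := by
    rw [one_div_mul_eq_div, le_div_iff₀ (by positivity)]
    have a1 : C ^ 2 * (W.card * k ^ 2) ≤ C ^ 2 * V.card := by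
      have : 2000 * κ ^ 2 * (V.card : ℝ) ≤ C ^ 2 * V.card := by gcongr
      linarith
    exact le_of_mul_le_mul_left a1 (by positivity)
  linarith

lemma omegaY_eq (Y : ℝ) (D : ℤ) (hD : D ≠ 0) : omegaY Y D = om Y D.natAbs := by
  classical
  have e : om Y D.natAbs = (D.natAbs.primeFactors.filter (fun p : ℕ => (p : ℝ) ≤ Y)).card := by
    rw [om]
  rw [e, omegaY, ← Nat.card_eq_finsetCard]
  refine Nat.card_congr (Equiv.subtypeEquivRight fun p => ?_)
  rw [Finset.mem_filter, Nat.mem_primeFactors, ← Int.natCast_dvd]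
  have : D.natAbs ≠ 0 := Int.natAbs_ne_zero.mpr hD
  tauto

end S8

/-- There are absolute constants `c, C > 0` such that for every fundamental discriminant `D` with
`|D| ≥ 16`, every `3 ≤ Y ≤ |D|` and every `k ≥ 1`, with `V` the set of quadratic Dirichlet
characters mod `|D|` whose `L`-function has no real zero `β > 1 - c/log |D|`, at least
`(1 - 1/k²)·#V` of the `χ ∈ V` satisfy
`L(1,χ) ≥ (log |D|)^{-kC√((log(ω_Y(D)+2) + log log Y)/log log |D| + 2^{-ω_Y(D)})}`. -/
theorem statement_8 :
    ∃ c C : ℝ, 0 < c ∧ 0 < C ∧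
      ∀ (D : ℤ) [NeZero D.natAbs], IsFundDiscr D → 16 ≤ |D| →
        ∀ Y : ℝ, 3 ≤ Y → Y ≤ |(D : ℝ)| → ∀ k : ℝ, 1 ≤ k →
          ∀ V : Finset (DirichletCharacter ℂ D.natAbs),
            (∀ χ, χ ∈ V ↔ χ ^ 2 = 1 ∧ χ ≠ 1 ∧
              ¬∃ β : ℝ, χ.LFunction β = 0 ∧ 1 - c / Real.log |(D : ℝ)| < β) →
            (1 - 1 / k ^ 2) * V.card ≤
              (Nat.card {χ : DirichletCharacter ℂ D.natAbs // χ ∈ V ∧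
                Real.log |(D : ℝ)| ^ (-(k * C * Real.sqrt
                    ((Real.log ((omegaY Y D : ℝ) + 2) + Real.log (Real.log Y)) /
                        Real.log (Real.log |(D : ℝ)|) +
                      2 ^ (-(omegaY Y D : ℝ))))) ≤ (χ.LFunction 1).re} : ℝ) := by
  obtain ⟨c, C, hc, hC, h⟩ := S8.core
  refine ⟨c, C, hc, hC, ?_⟩
  intro D _ _ h16 Y hY _ k hk V hV
  have hD : |(D : ℝ)| = (D.natAbs : ℝ) := by
    rw [Nat.cast_natAbs, Int.cast_abs]
  have hD0 : D ≠ 0 := by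
    rintro rfl
    norm_num at h16
  have hq : 16 ≤ D.natAbs := by
    rw [Int.abs_eq_natAbs] at h16
    exact_mod_cast h16
  rw [hD] at hV ⊢
  rw [S8.omegaY_eq Y D hD0]
  exact h D.natAbs hq Y hY k hk V hV
end
end

section
/- Let N(X) denote the number of fundamental discriminants D with |D| ≤ X. For all ε > 0 and δ > 0 there exists a constant C > 0 such that for all X ≥ 3 and all real Y with 3 ≤ Y ≤ X^{1−δ}: | (1/N(X)) · ∑_{D fundamental, |D| ≤ X} ω_Y(D) − ∑_{p ≤ Y} 1/(p+1) | ≤ C · Y^{1/2} · X^{−1/2 + ε}, where the second sum runs over primes p ≤ Y. -/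
open Filter Topology NumberField

noncomputable section

/-- `∑_{p ≤ Y} f p`, the sum over primes `p ≤ Y`. -/
def primeSum (Y : ℝ) (f : ℕ → ℝ) : ℝ :=
  ∑ᶠ p ∈ {p : ℕ | p.Prime ∧ (p : ℝ) ≤ Y}, f p

open scoped Classical in
/-- Number of positive integers up to `Z` satisfying `P`. -/
def cnt (P : ℕ → Prop) (Z : ℝ) : ℝ := (((Finset.Ioc 0 ⌊Z⌋₊).filter P).card : ℝ)

lemma sq_dvd_sq_mul_sqfree {d a b : ℕ} (ha : Squarefree a) (hb : 0 < b) :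
    d ^ 2 ∣ b ^ 2 * a ↔ d ∣ b := by
  constructor
  · intro h
    have hg : 0 < Nat.gcd d b := Nat.gcd_pos_of_pos_right _ hb
    obtain ⟨g, d', b', hg0, hco, hd, hb'⟩ := Nat.exists_coprime' (m := d) (n := b) hg
    subst hd hb'
    have h1 : d' ^ 2 ∣ b' ^ 2 * a := by
      have h2 : g ^ 2 * d' ^ 2 ∣ g ^ 2 * (b' ^ 2 * a) := by
        convert h using 1 <;> ring
      exact Nat.dvd_of_mul_dvd_mul_left (by positivity) h2
    have h3 : d' ^ 2 ∣ a := (Nat.Coprime.pow 2 2 hco).dvd_of_dvd_mul_left h1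
    have h4 : IsUnit d' := ha d' (by rwa [← sq])
    rw [Nat.isUnit_iff] at h4
    subst h4
    simp
  · intro h
    exact Dvd.dvd.mul_right (pow_dvd_pow_of_dvd h 2) a

open ArithmeticFunction in
lemma sum_moebius_sq {n M : ℕ} (hn : 0 < n) (hM : n < (M + 1) ^ 2) :
    ∑ d ∈ Finset.range (M + 1), (if d ^ 2 ∣ n then moebius d else 0) =
      if Squarefree n then 1 else 0 := by
  obtain ⟨a, b, hab, ha⟩ := Nat.sq_mul_squarefree n
  have hb : 0 < b := by
    rcases Nat.eq_zero_or_pos b with h | h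
    · subst h; simp at hab; omega
    · exact h
  have ha0 : 0 < a := Nat.pos_of_ne_zero ha.ne_zero
  have hbM : b < M + 1 := by
    have : b ^ 2 < (M + 1) ^ 2 := lt_of_le_of_lt (by rw [← hab]; exact Nat.le_mul_of_pos_right _ ha0) hM
    exact lt_of_pow_lt_pow_left₀ 2 (by omega) this
  have e1 : ∑ d ∈ Finset.range (M + 1), (if d ^ 2 ∣ n then moebius d else 0) =
      ∑ d ∈ b.divisors, moebius d := by
    rw [← Finset.sum_filter]
    apply Finset.sum_congr _ (fun _ _ => rfl)
    ext d
    simp only [Finset.mem_filter, Finset.mem_range, Nat.mem_divisors]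
    rw [← hab, sq_dvd_sq_mul_sqfree ha hb]
    constructor
    · rintro ⟨h1, h2⟩; exact ⟨h2, by omega⟩
    · rintro ⟨h1, h2⟩
      exact ⟨lt_of_le_of_lt (Nat.le_of_dvd hb h1) hbM, h1⟩
  rw [e1, ← coe_mul_zeta_apply, moebius_mul_coe_zeta, one_apply]
  have : b = 1 ↔ Squarefree n := by
    constructor
    · rintro rfl; rw [← hab]; simpa using ha
    · intro h
      have := h b (by rw [← hab, ← sq]; exact Dvd.intro _ rfl)
      exact Nat.isUnit_iff.1 this
  simp only [this]

open ArithmeticFunction in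
lemma cnt_sqfree_eq (Z : ℝ) :
    cnt Squarefree Z = ∑ d ∈ Finset.range (Nat.sqrt ⌊Z⌋₊ + 1),
      (moebius d : ℝ) * ((⌊Z⌋₊ / d ^ 2 : ℕ) : ℝ) := by
  classical
  set N := ⌊Z⌋₊
  have h1 : cnt Squarefree Z = ∑ n ∈ Finset.Ioc 0 N, (((if Squarefree n then 1 else 0 : ℤ)) : ℝ) := by
    unfold cnt
    rw [Finset.card_filter]
    push_cast
    rfl
  rw [h1]
  have h2 : ∀ n ∈ Finset.Ioc 0 N, (((if Squarefree n then 1 else 0 : ℤ)) : ℝ) =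
      ∑ d ∈ Finset.range (Nat.sqrt N + 1), (if d ^ 2 ∣ n then (moebius d : ℝ) else 0) := by
    intro n hn
    rw [Finset.mem_Ioc] at hn
    rw [← sum_moebius_sq hn.1 (M := Nat.sqrt N) (lt_of_le_of_lt hn.2 (by rw [sq]; exact Nat.lt_succ_sqrt N))]
    push_cast
    rfl
  rw [Finset.sum_congr rfl h2, Finset.sum_comm]
  refine Finset.sum_congr rfl fun d _ => ?_
  rw [← Finset.sum_filter, Finset.sum_const, Nat.Ioc_filter_dvd_card_eq_div, nsmul_eq_mul, mul_comm]

/-- terms of the series for the density of squarefree numbers -/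
def mterm (d : ℕ) : ℝ := (ArithmeticFunction.moebius d : ℝ) * ((d : ℝ) ^ 2)⁻¹

lemma abs_mu_le (d : ℕ) : |(ArithmeticFunction.moebius d : ℝ)| ≤ 1 := by
  exact_mod_cast ArithmeticFunction.abs_moebius_le_one (n := d)

lemma abs_mterm_le (d : ℕ) : |mterm d| ≤ ((d : ℝ) ^ 2)⁻¹ := by
  unfold mterm
  rw [abs_mul, abs_of_nonneg (by positivity : (0:ℝ) ≤ ((d : ℝ) ^ 2)⁻¹)]
  exact mul_le_of_le_one_left (by positivity) (abs_mu_le d)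

lemma summable_mterm : Summable mterm := by
  have h : Summable (fun n : ℕ => ((n : ℝ) ^ 2)⁻¹) := by
    simp
  exact Summable.of_norm_bounded h (fun d => by simpa using abs_mterm_le d)

lemma tail_mterm (M : ℕ) : |(∑' d, mterm d) - ∑ d ∈ Finset.range (M + 1), mterm d| ≤ 2 / (M + 1) := by
  have ht := summable_mterm.hasSum.tendsto_sum_nat
  have ht2 := (ht.sub_const (∑ d ∈ Finset.range (M + 1), mterm d)).abs
  refine le_of_tendsto ht2 ?_
  filter_upwards [Filter.eventually_ge_atTop (M + 1)] with n hn
  rw [← Finset.sum_Ico_eq_sub _ hn]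
  refine (Finset.abs_sum_le_sum_abs _ _).trans ?_
  refine (Finset.sum_le_sum fun d _ => abs_mterm_le d).trans ?_
  have : Finset.Ico (M + 1) n = Finset.Ioo M n := by ext; simp
  rw [this]
  exact sum_Ioo_inv_sq_le M n

lemma mtsum_pos : 0 < ∑' d, mterm d := by
  have h1 := summable_mterm.hasSum.add hasSum_zeta_two
  have h2 := le_hasSum h1 1 (fun j _ => by
    have := (abs_le.1 (abs_mterm_le j)).1
    rw [one_div]; linarith)
  have h3 : mterm 1 = 1 := by simp [mterm]
  rw [h3] at h2
  have := Real.pi_lt_d2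
  have := Real.pi_pos
  norm_num at h2
  nlinarith

theorem sqfree_asymp : ∃ c B : ℝ, 0 < c ∧ 0 < B ∧ ∀ Z : ℝ, 0 ≤ Z →
    |cnt Squarefree Z - c * Z| ≤ B * √Z := by
  refine ⟨∑' d, mterm d, 4, mtsum_pos, by norm_num, fun Z hZ => ?_⟩
  set M := Nat.sqrt ⌊Z⌋₊ with hM
  have hM1 : (M : ℝ) ≤ √Z := by
    apply Real.le_sqrt_of_sq_le
    have : M ^ 2 ≤ ⌊Z⌋₊ := by rw [sq]; exact Nat.sqrt_le _
    calc (M : ℝ) ^ 2 = ((M ^ 2 : ℕ) : ℝ) := by push_cast; rfl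
      _ ≤ ⌊Z⌋₊ := by exact_mod_cast this
      _ ≤ Z := Nat.floor_le hZ
  have hM2 : √Z ≤ M + 1 := by
    rw [Real.sqrt_le_left (by positivity)]
    have : ⌊Z⌋₊ + 1 ≤ (M + 1) ^ 2 := by rw [sq]; exact Nat.lt_succ_sqrt _
    calc Z ≤ ⌊Z⌋₊ + 1 := (Nat.lt_floor_add_one Z).le
      _ ≤ (((M + 1) ^ 2 : ℕ) : ℝ) := by exact_mod_cast this
      _ = _ := by push_cast; rfl
  have h1 : |cnt Squarefree Z - Z * ∑ d ∈ Finset.range (M + 1), mterm d| ≤ M := by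
    rw [cnt_sqfree_eq, ← hM, Finset.mul_sum, ← Finset.sum_sub_distrib, Finset.sum_range_succ']
    have h0 : ((ArithmeticFunction.moebius 0 : ℤ) : ℝ) * ((⌊Z⌋₊ / 0 ^ 2 : ℕ) : ℝ) - Z * mterm 0 = 0 := by
      simp [mterm]
    rw [h0, add_zero]
    refine (Finset.abs_sum_le_sum_abs _ _).trans ?_
    have : ∀ d ∈ Finset.range M, |((ArithmeticFunction.moebius (d + 1) : ℤ) : ℝ) *
        ((⌊Z⌋₊ / (d + 1) ^ 2 : ℕ) : ℝ) - Z * mterm (d + 1)| ≤ 1 := by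
      intro d _
      have e : ((ArithmeticFunction.moebius (d + 1) : ℤ) : ℝ) *
        ((⌊Z⌋₊ / (d + 1) ^ 2 : ℕ) : ℝ) - Z * mterm (d + 1) =
        ((ArithmeticFunction.moebius (d + 1) : ℤ) : ℝ) *
          (((⌊Z⌋₊ / (d + 1) ^ 2 : ℕ) : ℝ) - Z / (((d + 1) ^ 2 : ℕ) : ℝ)) := by
        unfold mterm; push_cast; ring
      rw [e, abs_mul, ← Nat.floor_div_natCast]
      refine mul_le_one₀ (abs_mu_le _) (abs_nonneg _) ?_
      have a1 := Nat.floor_le (a := Z / (((d + 1) ^ 2 : ℕ) : ℝ)) (by positivity)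
      have a2 := Nat.lt_floor_add_one (Z / (((d + 1) ^ 2 : ℕ) : ℝ))
      rw [abs_le]; constructor <;> linarith
    refine (Finset.sum_le_sum this).trans ?_
    simp
  have h2 := tail_mterm M
  have h3 : Z * |(∑' d, mterm d) - ∑ d ∈ Finset.range (M + 1), mterm d| ≤ 2 * √Z := by
    calc _ ≤ Z * (2 / (M + 1)) := by gcongr
      _ = (√Z * √Z) * (2 / (M + 1)) := by rw [Real.mul_self_sqrt hZ]
      _ = √Z * (√Z / (M + 1)) * 2 := by ring
      _ ≤ √Z * 1 * 2 := by
        gcongr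
        rw [div_le_one (by positivity)]; exact hM2
      _ = _ := by ring
  have h4 : |Z * (∑ d ∈ Finset.range (M + 1), mterm d) - (∑' d, mterm d) * Z| ≤ 2 * √Z := by
    refine le_trans (le_of_eq ?_) h3
    rw [← abs_of_nonneg hZ, ← abs_mul, abs_of_nonneg hZ, ← abs_neg]
    congr 1; ring
  have := abs_sub_le (cnt Squarefree Z) (Z * ∑ d ∈ Finset.range (M + 1), mterm d) ((∑' d, mterm d) * Z)
  have := Real.sqrt_nonneg Z
  linarith

lemma cnt_split (P Q : ℕ → Prop) (Z : ℝ) :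
    cnt P Z = cnt (fun n => P n ∧ Q n) Z + cnt (fun n => P n ∧ ¬ Q n) Z := by
  classical
  unfold cnt
  have := Finset.card_filter_add_card_filter_not (s := (Finset.Ioc 0 ⌊Z⌋₊).filter P) Q
  rw [Finset.filter_filter, Finset.filter_filter] at this
  rw [← Nat.cast_add]
  congr 1
  convert this.symm

lemma cnt_scale (P : ℕ → Prop) (p : ℕ) (hp : p.Prime) (hP : ∀ n, P (p * n) ↔ P n) (Z : ℝ) :
    cnt (fun n => (Squarefree n ∧ P n) ∧ p ∣ n) Z =
      cnt (fun n => (Squarefree n ∧ P n) ∧ ¬ p ∣ n) (Z / p) := by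
  classical
  unfold cnt
  rw [Nat.floor_div_natCast]
  congr 1
  symm
  apply Finset.card_bij (fun n _ => p * n)
  · intro n hn
    simp only [Finset.mem_filter, Finset.mem_Ioc] at hn ⊢
    obtain ⟨⟨h1, h2⟩, ⟨h3, h4⟩, h5⟩ := hn
    refine ⟨⟨Nat.mul_pos hp.pos h1, ?_⟩, ⟨?_, (hP n).2 h4⟩, Dvd.intro _ rfl⟩
    · rw [mul_comm]; exact (Nat.le_div_iff_mul_le hp.pos).1 h2
    · rw [Nat.squarefree_mul ((Nat.Prime.coprime_iff_not_dvd hp).2 h5)]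
      exact ⟨hp.prime.squarefree, h3⟩
  · intro a _ b _ h
    exact Nat.eq_of_mul_eq_mul_left hp.pos h
  · intro b hb
    simp only [Finset.mem_filter, Finset.mem_Ioc] at hb
    obtain ⟨⟨h1, h2⟩, ⟨h3, h4⟩, ⟨k, rfl⟩⟩ := hb
    refine ⟨k, ?_, rfl⟩
    rw [Nat.squarefree_mul_iff] at h3
    simp only [Finset.mem_filter, Finset.mem_Ioc]
    refine ⟨⟨Nat.pos_of_mul_pos_left h1, ?_⟩, ⟨h3.2.2, (hP k).1 h4⟩,
      (Nat.Prime.coprime_iff_not_dvd hp).1 h3.1⟩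
    rw [Nat.le_div_iff_mul_le hp.pos, mul_comm]; exact h2

lemma prime_asymp (P : ℕ → Prop) (c B : ℝ) (hc : 0 ≤ c) (hB : 0 ≤ B)
    (h : ∀ Z : ℝ, 0 ≤ Z → |cnt (fun n => Squarefree n ∧ P n) Z - c * Z| ≤ B * √Z)
    (p : ℕ) (hp : p.Prime) (hP : ∀ n, P (p * n) ↔ P n) (Z : ℝ) (hZ : 0 ≤ Z) :
    |cnt (fun n => (Squarefree n ∧ P n) ∧ p ∣ n) Z - c * Z / (p + 1)| ≤ (4 * B + c) * √(Z / p) := by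
  have hp2 : (2 : ℝ) ≤ p := by exact_mod_cast hp.two_le
  have hp0 : (0 : ℝ) < p := by linarith
  obtain ⟨n, hn⟩ := pow_unbounded_of_one_lt Z (show (1 : ℝ) < p by linarith)
  induction n generalizing Z with
  | zero =>
    rw [pow_zero] at hn
    have h0 : cnt (fun n => (Squarefree n ∧ P n) ∧ p ∣ n) Z = 0 := by
      unfold cnt
      rw [Nat.floor_eq_zero.2 hn]; simp
    rw [h0, zero_sub, abs_neg, abs_of_nonneg (by positivity)]
    have h1 : Z / (p + 1) ≤ √(Z / p) := by
      apply Real.le_sqrt_of_sq_le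
      rw [div_pow, div_le_div_iff₀ (by positivity) hp0]
      have : Z ^ 2 ≤ Z := by nlinarith
      calc Z ^ 2 * p ≤ Z * p := by gcongr
        _ ≤ Z * (p + 1) ^ 2 := by gcongr; nlinarith
    calc c * Z / (p + 1) = c * (Z / (p + 1)) := by ring
      _ ≤ c * √(Z / p) := by gcongr
      _ ≤ _ := by gcongr; linarith
  | succ n ih =>
    have hZp : 0 ≤ Z / p := by positivity
    have i1 := ih (Z / p) hZp (by rw [div_lt_iff₀ hp0, ← pow_succ]; exact hn)
    have i2 := h (Z / p) hZp
    have e1 := cnt_scale P p hp hP Z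
    have e2 := cnt_split (fun n => Squarefree n ∧ P n) (fun n => p ∣ n) (Z / p)
    have i3 : √(Z / p / p) ≤ 3 / 4 * √(Z / p) := by
      rw [Real.sqrt_le_left (by positivity), mul_pow, Real.sq_sqrt hZp]
      rw [div_le_iff₀ hp0]
      nlinarith
    have e3 : cnt (fun n => (Squarefree n ∧ P n) ∧ p ∣ n) Z - c * Z / (p + 1) =
      (cnt (fun n => Squarefree n ∧ P n) (Z / p) - c * (Z / p)) -
      (cnt (fun n => (Squarefree n ∧ P n) ∧ p ∣ n) (Z / p) - c * (Z / p) / (p + 1)) := by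
      rw [e1, e2]; field_simp; ring
    rw [e3]
    refine (abs_sub _ _).trans ?_
    have i4 : (4 * B + c) * √(Z / p / p) ≤ (4 * B + c) * (3 / 4 * √(Z / p)) := by gcongr
    have i5 : 0 ≤ c * √(Z / p) := by positivity
    linarith

/-- odd squarefree counting -/
theorem odd_asymp : ∃ q B : ℝ, 0 < q ∧ 0 < B ∧ ∀ Z : ℝ, 0 ≤ Z →
    |cnt (fun n => Squarefree n ∧ n % 2 = 1) Z - q * Z| ≤ B * √Z := by
  obtain ⟨c, B, hc, hB, h⟩ := sqfree_asymp
  refine ⟨2 / 3 * c, 5 * B + c, by positivity, by positivity, fun Z hZ => ?_⟩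
  have h1 := prime_asymp (fun _ => True) c B hc.le hB.le (by simpa using h) 2 Nat.prime_two
    (by simp) Z hZ
  have h2 := h Z hZ
  have e := cnt_split Squarefree (fun n => 2 ∣ n) Z
  have e2 : cnt (fun n => Squarefree n ∧ ¬ 2 ∣ n) Z = cnt (fun n => Squarefree n ∧ n % 2 = 1) Z := by
    congr 1; funext n; simp
  have e3 : cnt (fun n => (Squarefree n ∧ True) ∧ 2 ∣ n) Z = cnt (fun n => Squarefree n ∧ 2 ∣ n) Z := by
    congr 1; funext n; simp
  rw [e3] at h1
  rw [e2] at e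
  have i : √(Z / (2 : ℕ)) ≤ √Z := Real.sqrt_le_sqrt (by push_cast; linarith)
  have i2 : (4 * B + c) * √(Z / (2 : ℕ)) ≤ (4 * B + c) * √Z := by gcongr
  have e4 : cnt (fun n => Squarefree n ∧ n % 2 = 1) Z - 2 / 3 * c * Z =
     (cnt Squarefree Z - c * Z) - (cnt (fun n => Squarefree n ∧ 2 ∣ n) Z - c * Z / ((2 : ℕ) + 1)) := by
    rw [e]; push_cast; ring
  rw [e4]
  refine (abs_sub _ _).trans ?_
  linarith

/-- Fundamental discriminants together with 1. -/
def GD (D : ℤ) : Prop := (Squarefree D ∧ D % 4 = 1) ∨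
    ∃ m : ℤ, D = 4 * m ∧ Squarefree m ∧ (m % 4 = 2 ∨ m % 4 = 3)

/-- the sign twist -/
def sg (n : ℕ) : ℤ := if n % 4 = 1 then (n : ℤ) else -(n : ℤ)

lemma natAbs_sg (n : ℕ) : (sg n).natAbs = n := by unfold sg; split_ifs <;> simp

lemma sg_mod (n : ℕ) (hn : n % 2 = 1) : sg n % 4 = 1 := by unfold sg; split_ifs <;> omega

lemma sg_natAbs (D : ℤ) (hD : D % 4 = 1) : sg D.natAbs = D := by unfold sg; split_ifs <;> omega

open scoped Classical in
/-- odd squarefree numbers up to `N` -/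
def OS (N : ℕ) : Finset ℕ := (Finset.Ioc 0 N).filter (fun n => Squarefree n ∧ n % 2 = 1)

lemma mem_OS {N n : ℕ} : n ∈ OS N ↔ (0 < n ∧ n ≤ N) ∧ Squarefree n ∧ n % 2 = 1 := by
  simp [OS]

open scoped Classical in
/-- finset of `GD` -/
def GF (N : ℕ) : Finset ℤ := (Finset.Icc (-(N : ℤ)) N).filter GD

lemma mem_GF {N : ℕ} {D : ℤ} : D ∈ GF N ↔ (-(N : ℤ) ≤ D ∧ D ≤ N) ∧ GD D := by
  simp [GF]

lemma GD_four {D : ℤ} (h : GD D) (h2 : ¬ D % 2 = 1) :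
    ∃ m : ℤ, D = 4 * m ∧ Squarefree m ∧ (m % 4 = 2 ∨ m % 4 = 3) := by
  rcases h with h | h
  · omega
  · exact h

lemma sqf_two_mul {k : ℕ} : Squarefree (2 * k) ↔ Squarefree k ∧ k % 2 = 1 := by
  rw [Nat.squarefree_mul_iff, Nat.coprime_two_left]
  constructor
  · rintro ⟨h1, h2, h3⟩; exact ⟨h3, Nat.odd_iff.1 h1⟩
  · rintro ⟨h1, h2⟩; exact ⟨Nat.odd_iff.2 h2, Nat.prime_two.prime.squarefree, h1⟩

lemma GF_sum (N : ℕ) (w : ℕ → ℝ) :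
    ∑ D ∈ GF N, w D.natAbs = ∑ n ∈ OS N, w n + ∑ n ∈ OS (N / 4), w (4 * n)
      + 2 * ∑ n ∈ OS (N / 8), w (8 * n) := by
  rw [← Finset.sum_filter_add_sum_filter_not (GF N) (fun D => D % 2 = 1),
    ← Finset.sum_filter_add_sum_filter_not ((GF N).filter (fun D => ¬ D % 2 = 1)) (fun D => D % 8 = 4),
    ← Finset.sum_filter_add_sum_filter_not
      (((GF N).filter (fun D => ¬ D % 2 = 1)).filter (fun D => ¬ D % 8 = 4)) (fun D => 0 < D)]
  have A : ∑ D ∈ (GF N).filter (fun D => D % 2 = 1), w D.natAbs = ∑ n ∈ OS N, w n := by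
    apply Finset.sum_nbij' Int.natAbs sg
    · intro D hD
      simp only [Finset.mem_filter, mem_GF] at hD
      obtain ⟨⟨h1, h2 | ⟨m, hm, _⟩⟩, h3⟩ := hD
      · rw [mem_OS, Int.squarefree_natAbs]
        exact ⟨by omega, h2.1, by omega⟩
      · omega
    · intro n hn
      rw [mem_OS] at hn
      have h1 := natAbs_sg n
      have h2 := sg_mod n hn.2.2
      simp only [Finset.mem_filter, mem_GF]
      refine ⟨⟨by omega, Or.inl ⟨?_, h2⟩⟩, by omega⟩
      rw [← Int.squarefree_natAbs, h1]; exact hn.2.1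
    · intro D hD
      simp only [Finset.mem_filter, mem_GF] at hD
      obtain ⟨⟨h1, h2 | ⟨m, hm, _⟩⟩, h3⟩ := hD
      · exact sg_natAbs D h2.2
      · omega
    · intro n _; exact natAbs_sg n
    · intro _ _; rfl
  have B : ∑ D ∈ ((GF N).filter (fun D => ¬ D % 2 = 1)).filter (fun D => D % 8 = 4), w D.natAbs =
      ∑ n ∈ OS (N / 4), w (4 * n) := by
    apply Finset.sum_nbij' (fun D => (D / 4).natAbs) (fun n => 4 * (-(sg n)))
    · intro D hD
      simp only [Finset.mem_filter, mem_GF] at hD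
      obtain ⟨⟨⟨h1, h2⟩, h3⟩, h4⟩ := hD
      obtain ⟨m, hm, hm1, hm2⟩ := GD_four h2 h3
      have : D / 4 = m := by omega
      rw [mem_OS, this, Int.squarefree_natAbs]
      exact ⟨by omega, hm1, by omega⟩
    · intro n hn
      rw [mem_OS] at hn
      have h1 := natAbs_sg n
      have h2 := sg_mod n hn.2.2
      simp only [Finset.mem_filter, mem_GF]
      refine ⟨⟨⟨by omega, Or.inr ⟨-(sg n), rfl, ?_, by omega⟩⟩, by omega⟩, by omega⟩
      rw [← Int.squarefree_natAbs, Int.natAbs_neg, h1]; exact hn.2.1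
    · intro D hD
      simp only [Finset.mem_filter, mem_GF] at hD
      obtain ⟨⟨⟨h1, h2⟩, h3⟩, h4⟩ := hD
      obtain ⟨m, hm, hm1, hm2⟩ := GD_four h2 h3
      have : D / 4 = m := by omega
      have h5 := sg_natAbs (-m) (by omega)
      rw [Int.natAbs_neg] at h5
      simp only [this, h5]; omega
    · intro n _
      have h1 := natAbs_sg n
      omega
    · intro D hD
      simp only [Finset.mem_filter] at hD
      congr 1; omega
  have C : ∑ D ∈ (((GF N).filter (fun D => ¬ D % 2 = 1)).filter (fun D => ¬ D % 8 = 4)).filter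
      (fun D => 0 < D), w D.natAbs = ∑ n ∈ OS (N / 8), w (8 * n) := by
    apply Finset.sum_nbij' (fun D : ℤ => (D / 8).natAbs) (fun n : ℕ => 8 * (n : ℤ))
    · intro D hD
      simp only [Finset.mem_filter, mem_GF] at hD
      obtain ⟨⟨⟨⟨h1, h2⟩, h3⟩, h4⟩, h5⟩ := hD
      obtain ⟨m, hm, hm1, hm2⟩ := GD_four h2 h3
      rw [← Int.squarefree_natAbs, show m.natAbs = 2 * (D / 8).natAbs by omega, sqf_two_mul] at hm1
      rw [mem_OS]
      exact ⟨by omega, hm1⟩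
    · intro n hn
      rw [mem_OS] at hn
      simp only [Finset.mem_filter, mem_GF]
      refine ⟨⟨⟨⟨by omega, Or.inr ⟨2 * (n : ℤ), by ring, ?_, by omega⟩⟩, by omega⟩, by omega⟩, by omega⟩
      rw [← Int.squarefree_natAbs, show (2 * (n : ℤ)).natAbs = 2 * n by omega, sqf_two_mul]
      exact hn.2
    · intro D hD
      simp only [Finset.mem_filter, mem_GF] at hD
      obtain ⟨⟨⟨⟨h1, h2⟩, h3⟩, h4⟩, h5⟩ := hD
      obtain ⟨m, hm, hm1, hm2⟩ := GD_four h2 h3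
      omega
    · intro n _
      omega
    · intro D hD
      simp only [Finset.mem_filter, mem_GF] at hD
      obtain ⟨⟨⟨⟨h1, h2⟩, h3⟩, h4⟩, h5⟩ := hD
      obtain ⟨m, hm, hm1, hm2⟩ := GD_four h2 h3
      congr 1; omega
  have E : ∑ D ∈ (((GF N).filter (fun D => ¬ D % 2 = 1)).filter (fun D => ¬ D % 8 = 4)).filter
      (fun D => ¬ 0 < D), w D.natAbs = ∑ n ∈ OS (N / 8), w (8 * n) := by
    apply Finset.sum_nbij' (fun D : ℤ => (D / 8).natAbs) (fun n : ℕ => -(8 * (n : ℤ)))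
    · intro D hD
      simp only [Finset.mem_filter, mem_GF] at hD
      obtain ⟨⟨⟨⟨h1, h2⟩, h3⟩, h4⟩, h5⟩ := hD
      obtain ⟨m, hm, hm1, hm2⟩ := GD_four h2 h3
      rw [← Int.squarefree_natAbs, show m.natAbs = 2 * (D / 8).natAbs by omega, sqf_two_mul] at hm1
      rw [mem_OS]
      exact ⟨by omega, hm1⟩
    · intro n hn
      rw [mem_OS] at hn
      simp only [Finset.mem_filter, mem_GF]
      refine ⟨⟨⟨⟨by omega, Or.inr ⟨-(2 * (n : ℤ)), by ring, ?_, by omega⟩⟩, by omega⟩, by omega⟩, by omega⟩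
      rw [← Int.squarefree_natAbs, show (-(2 * (n : ℤ))).natAbs = 2 * n by omega, sqf_two_mul]
      exact hn.2
    · intro D hD
      simp only [Finset.mem_filter, mem_GF] at hD
      obtain ⟨⟨⟨⟨h1, h2⟩, h3⟩, h4⟩, h5⟩ := hD
      obtain ⟨m, hm, hm1, hm2⟩ := GD_four h2 h3
      omega
    · intro n _
      omega
    · intro D hD
      simp only [Finset.mem_filter, mem_GF] at hD
      obtain ⟨⟨⟨⟨h1, h2⟩, h3⟩, h4⟩, h5⟩ := hD
      obtain ⟨m, hm, hm1, hm2⟩ := GD_four h2 h3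
      congr 1; omega
  rw [A, B, C, E]; ring

lemma OS_one (Z : ℝ) : ∑ _n ∈ OS ⌊Z⌋₊, (1 : ℝ) = cnt (fun n => Squarefree n ∧ n % 2 = 1) Z := by
  unfold OS cnt
  simp only [Finset.sum_const, nsmul_eq_mul, mul_one]
  congr!

lemma OS_dvd (Z : ℝ) (p : ℕ) : ∑ n ∈ OS ⌊Z⌋₊, (if p ∣ n then (1 : ℝ) else 0) =
    cnt (fun n => (Squarefree n ∧ n % 2 = 1) ∧ p ∣ n) Z := by
  classical
  unfold OS cnt
  rw [← Finset.sum_filter, Finset.filter_filter]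
  simp only [Finset.sum_const, nsmul_eq_mul, mul_one]
  congr!

lemma sqrt_le_div (X : ℝ) (hX : 0 ≤ X) (a b : ℝ) (ha : 0 < a) (hab : a ≤ b) : √(X / b) ≤ √(X / a) := by
  apply Real.sqrt_le_sqrt
  gcongr

theorem GF_asymp : ∃ a K : ℝ, 0 < a ∧ 0 < K ∧ ∀ X : ℝ, 0 ≤ X →
    |∑ _D ∈ GF ⌊X⌋₊, (1 : ℝ) - a * X| ≤ K * √X ∧
    ∀ p : ℕ, p.Prime →
      |∑ D ∈ GF ⌊X⌋₊, (if p ∣ D.natAbs then (1 : ℝ) else 0) - a * X / (p + 1)| ≤ K * √(X / p) := by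
  obtain ⟨q, B, hq, hB, h⟩ := odd_asymp
  refine ⟨3 / 2 * q, 16 * B + 4 * q, by positivity, by positivity, fun X hX => ?_⟩
  have f4 : ⌊X⌋₊ / 4 = ⌊X / 4⌋₊ := by
    have := Nat.floor_div_natCast X 4; push_cast at this; exact this.symm
  have f8 : ⌊X⌋₊ / 8 = ⌊X / 8⌋₊ := by
    have := Nat.floor_div_natCast X 8; push_cast at this; exact this.symm
  have h4 := h (X / 4) (by positivity)
  have h8 := h (X / 8) (by positivity)
  have h1 := h X hX
  have s0 := Real.sqrt_nonneg X
  constructor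
  · have e := GF_sum ⌊X⌋₊ (fun _ => 1)
    rw [f4, f8, OS_one, OS_one, OS_one] at e
    rw [e]
    have s4 : B * √(X / 4) ≤ B * √X := by gcongr; linarith
    have s8 : B * √(X / 8) ≤ B * √X := by gcongr; linarith
    have : 0 ≤ B * √X := by positivity
    have : 0 ≤ q * √X := by positivity
    rw [abs_le] at *
    constructor <;> linarith
  · intro p hp
    have hp0 : (0 : ℝ) < p := by exact_mod_cast hp.pos
    have sp := Real.sqrt_nonneg (X / p)
    have e := GF_sum ⌊X⌋₊ (fun n => if p ∣ n then 1 else 0)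
    rw [e, f4, f8]
    have : 0 ≤ B * √(X / p) := by positivity
    have : 0 ≤ q * √(X / p) := by positivity
    rcases hp.eq_two_or_odd with rfl | hodd
    · have z : ∑ n ∈ OS ⌊X⌋₊, (if 2 ∣ n then (1 : ℝ) else 0) = 0 := by
        apply Finset.sum_eq_zero
        intro n hn
        rw [mem_OS] at hn
        rw [if_neg (by omega)]
      simp only [show ∀ n : ℕ, 2 ∣ 4 * n from fun n => by omega,
        show ∀ n : ℕ, 2 ∣ 8 * n from fun n => by omega, if_true]
      rw [z, OS_one, OS_one]
      push_cast at *
      have s4 : B * √(X / 4) ≤ B * √(X / 2) := by gcongr; norm_num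
      have s8 : B * √(X / 8) ≤ B * √(X / 2) := by gcongr; norm_num
      rw [abs_le] at *
      constructor <;> linarith
    · have hc : ∀ k : ℕ, ∀ n : ℕ, p ∣ 2 ^ k * n ↔ p ∣ n := by
        intro k n
        have hco : Nat.Coprime p (2 ^ k) :=
          Nat.Coprime.pow_right k ((Nat.coprime_primes hp Nat.prime_two).2 (by omega))
        exact hco.dvd_mul_left
      have c4 : ∀ n : ℕ, p ∣ 4 * n ↔ p ∣ n := fun n => hc 2 n
      have c8 : ∀ n : ℕ, p ∣ 8 * n ↔ p ∣ n := fun n => hc 3 n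
      simp only [c4, c8]
      rw [OS_dvd, OS_dvd, OS_dvd]
      have key := prime_asymp (fun n => n % 2 = 1) q B hq.le hB.le h p hp (by
        intro n
        rw [Nat.mul_mod, hodd]; simp)
      have k1 := key X hX
      have k4 := key (X / 4) (by positivity)
      have k8 := key (X / 8) (by positivity)
      have s4 : (4 * B + q) * √(X / 4 / p) ≤ (4 * B + q) * √(X / p) := by gcongr; linarith
      have s8 : (4 * B + q) * √(X / 8 / p) ≤ (4 * B + q) * √(X / p) := by gcongr; linarith
      have m : 3 / 2 * q * X / (p + 1) = q * X / (p + 1) + q * (X / 4) / (p + 1) +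
        2 * (q * (X / 8) / (p + 1)) := by ring
      rw [m]
      rw [abs_le] at *
      constructor <;> linarith

lemma sum_inv_sqrt (M : ℕ) : ∑ n ∈ Finset.Ioc 0 M, (1 : ℝ) / √n ≤ 2 * √M := by
  induction M with
  | zero => simp
  | succ k ih =>
    rw [Finset.sum_Ioc_succ_top (Nat.zero_le k)]
    have hk : (0 : ℝ) ≤ k := by positivity
    have h1 : 0 < √((k + 1 : ℕ) : ℝ) := Real.sqrt_pos.2 (by positivity)
    have h2 := Real.sq_sqrt hk
    have h3 := Real.sq_sqrt (show (0 : ℝ) ≤ ((k + 1 : ℕ) : ℝ) by positivity)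
    have h0 := Real.sqrt_nonneg (k : ℝ)
    push_cast at *
    have : 1 / √((k : ℝ) + 1) ≤ 2 * √((k : ℝ) + 1) - 2 * √(k : ℝ) := by
      rw [div_le_iff₀ h1]
      nlinarith [sq_nonneg (√((k : ℝ) + 1) - √(k : ℝ))]
    linarith

/-- primes up to `Y` -/
def PY (Y : ℝ) : Finset ℕ := (Finset.Ioc 0 ⌊Y⌋₊).filter Nat.Prime

lemma PY_coe (Y : ℝ) (hY : 0 ≤ Y) : {p : ℕ | p.Prime ∧ (p : ℝ) ≤ Y} = ↑(PY Y) := by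
  ext p
  simp only [PY, Set.mem_ofPred_eq, Finset.coe_filter, Finset.mem_Ioc, Nat.le_floor_iff hY]
  constructor
  · rintro ⟨h1, h2⟩; exact ⟨⟨h1.pos, h2⟩, h1⟩
  · rintro ⟨⟨_, h2⟩, h1⟩; exact ⟨h1, h2⟩

lemma primeSum_eq (Y : ℝ) (hY : 0 ≤ Y) (f : ℕ → ℝ) : primeSum Y f = ∑ p ∈ PY Y, f p := by
  unfold primeSum
  rw [PY_coe Y hY, finsum_mem_coe_finset]

lemma omegaY_eq (Y : ℝ) (hY : 0 ≤ Y) (D : ℤ) :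
    (omegaY Y D : ℝ) = ∑ p ∈ PY Y, (if p ∣ D.natAbs then (1 : ℝ) else 0) := by
  unfold omegaY
  rw [← Finset.sum_filter]
  simp only [Finset.sum_const, nsmul_eq_mul, mul_one]
  congr 1
  apply Nat.subtype_card
  intro p
  have := Set.ext_iff.1 (PY_coe Y hY) p
  simp only [Set.mem_ofPred_eq, Finset.mem_coe] at this
  rw [Finset.mem_filter, ← this, Int.natCast_dvd, and_assoc]

lemma GD_iff (D : ℤ) : IsFundDiscr D ↔ D ≠ 1 ∧ GD D := Iff.rfl

lemma abs_le_floor (X : ℝ) (hX : 0 ≤ X) (D : ℤ) :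
    |(D : ℝ)| ≤ X ↔ -(⌊X⌋₊ : ℤ) ≤ D ∧ D ≤ (⌊X⌋₊ : ℤ) := by
  have : |(D : ℝ)| = ((D.natAbs : ℕ) : ℝ) := by
    rw [Nat.cast_natAbs]; push_cast; rfl
  rw [this, ← Nat.le_floor_iff hX]
  omega

lemma mem_erase_GF (X : ℝ) (hX : 0 ≤ X) (D : ℤ) :
    D ∈ (GF ⌊X⌋₊).erase 1 ↔ IsFundDiscr D ∧ |(D : ℝ)| ≤ X := by
  rw [Finset.mem_erase, mem_GF, GD_iff, abs_le_floor X hX]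
  tauto

lemma fd_set (X : ℝ) (hX : 0 ≤ X) :
    {D : ℤ | IsFundDiscr D ∧ |(D : ℝ)| ≤ X} = ↑((GF ⌊X⌋₊).erase 1) := by
  ext D
  rw [Finset.mem_coe, mem_erase_GF X hX]; rfl

lemma fdCount_eq (X : ℝ) (hX : 0 ≤ X) :
    fdCount (fun _ => True) X = ((GF ⌊X⌋₊).erase 1).card := by
  unfold fdCount
  apply Nat.subtype_card
  intro D
  rw [mem_erase_GF X hX]; tauto

lemma one_mem_GF (X : ℝ) (hX : 3 ≤ X) : (1 : ℤ) ∈ GF ⌊X⌋₊ := by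
  have : 3 ≤ ⌊X⌋₊ := Nat.le_floor (by exact_mod_cast hX)
  rw [mem_GF]
  exact ⟨by omega, Or.inl ⟨squarefree_one, by norm_num⟩⟩

lemma neg_three_mem (X : ℝ) (hX : 3 ≤ X) : (-3 : ℤ) ∈ (GF ⌊X⌋₊).erase 1 := by
  have : 3 ≤ ⌊X⌋₊ := Nat.le_floor (by exact_mod_cast hX)
  rw [Finset.mem_erase, mem_GF]
  refine ⟨by norm_num, by omega, Or.inl ⟨?_, by norm_num⟩⟩
  rw [← Int.squarefree_natAbs]
  exact Nat.prime_three.prime.squarefree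

/-- Mean of `ω_Y` over fundamental discriminants: for all `ε, δ > 0` there is `C > 0` such that
for `X ≥ 3` and `3 ≤ Y ≤ X^{1-δ}`,
`|(1/N(X)) ∑_{|D| ≤ X} ω_Y(D) - ∑_{p ≤ Y} 1/(p+1)| ≤ C Y^{1/2} X^{-1/2+ε}`. -/
theorem statement_9 (ε δ : ℝ) (hε : 0 < ε) (hδ : 0 < δ) :
    ∃ C : ℝ, 0 < C ∧
      ∀ X : ℝ, 3 ≤ X → ∀ Y : ℝ, 3 ≤ Y → Y ≤ X ^ (1 - δ) →
        |(1 / (fdCount (fun _ => True) X : ℝ)) *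
            (∑ᶠ D ∈ {D : ℤ | IsFundDiscr D ∧ |(D : ℝ)| ≤ X}, (omegaY Y D : ℝ)) -
          primeSum Y (fun p => 1 / ((p : ℝ) + 1))| ≤
          C * Y ^ ((1 : ℝ) / 2) * X ^ (-(1 : ℝ) / 2 + ε) := by
  obtain ⟨a, K, ha, hK, h⟩ := GF_asymp
  have hL : 0 < K + 1 := by linarith
  -- lower bound constant
  set b : ℝ := min (a / 2) (a ^ 2 / (4 * (K + 1) ^ 2)) with hb
  have hb0 : 0 < b := lt_min (by positivity) (by positivity)
  refine ⟨4 * (K + 1) / b, by positivity, fun X hX Y hY _ => ?_⟩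
  have hX0 : 0 < X := by linarith
  have hY0 : 0 < Y := by linarith
  obtain ⟨hN, hp⟩ := h X hX0.le
  have hsX1 : 1 ≤ √X := Real.one_le_sqrt.2 (by linarith)
  have hsX : √X * √X = X := Real.mul_self_sqrt hX0.le
  set N : ℝ := (fdCount (fun _ => True) X : ℝ) with hNdef
  have hN1 : (1 : ℝ) ≤ N := by
    rw [hNdef, fdCount_eq X hX0.le]
    exact_mod_cast Finset.card_pos.2 ⟨_, neg_three_mem X hX⟩
  have hNe : N + 1 = ∑ _D ∈ GF ⌊X⌋₊, (1 : ℝ) := by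
    rw [hNdef, fdCount_eq X hX0.le, Finset.sum_const, nsmul_eq_mul, mul_one]
    exact_mod_cast Finset.card_erase_add_one (one_mem_GF X hX)
  have hNa : |N - a * X| ≤ (K + 1) * √X := by
    rw [← hNe] at hN
    rw [abs_le] at *
    constructor <;> linarith
  have hNb : b * X ≤ N := by
    by_cases hc : (K + 1) * √X ≤ a / 2 * X
    · have : b * X ≤ a / 2 * X := by gcongr; exact min_le_left _ _
      have := (abs_le.1 hNa).1
      linarith
    · push Not at hc
      have h1 : a / 2 * √X ≤ K + 1 := by
        by_contra hcon
        push Not at hcon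
        have : (K + 1) * √X < a / 2 * √X * √X := by gcongr
        rw [mul_assoc, hsX] at this
        linarith
      have h2 : a ^ 2 * X ≤ 4 * (K + 1) ^ 2 := by
        have : (a / 2 * √X) ^ 2 ≤ (K + 1) ^ 2 := by gcongr
        rw [mul_pow, Real.sq_sqrt hX0.le] at this
        linarith
      have h3 : b * X ≤ a ^ 2 / (4 * (K + 1) ^ 2) * X := by gcongr; exact min_le_right _ _
      have h4 : a ^ 2 / (4 * (K + 1) ^ 2) * X ≤ 1 := by
        rw [div_mul_eq_mul_div, div_le_one (by positivity)]; exact h2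
      linarith
  have hN0 : 0 < N := by linarith
  have hsum : (∑ᶠ D ∈ {D : ℤ | IsFundDiscr D ∧ |(D : ℝ)| ≤ X}, (omegaY Y D : ℝ)) =
      ∑ p ∈ PY Y, ∑ D ∈ GF ⌊X⌋₊, (if p ∣ D.natAbs then (1 : ℝ) else 0) := by
    rw [fd_set X hX0.le, finsum_mem_coe_finset, Finset.sum_comm, Finset.sum_erase]
    · exact Finset.sum_congr rfl fun D _ => omegaY_eq Y hY0.le D
    · rw [omegaY_eq Y hY0.le]
      apply Finset.sum_eq_zero
      intro p hp
      rw [PY, Finset.mem_filter] at hp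
      rw [if_neg]
      simpa using hp.2.ne_one
  rw [hsum, primeSum_eq Y hY0.le]
  have hdiff : (1 / N) * (∑ p ∈ PY Y, ∑ D ∈ GF ⌊X⌋₊, (if p ∣ D.natAbs then (1 : ℝ) else 0)) -
      ∑ p ∈ PY Y, 1 / ((p : ℝ) + 1) =
      (1 / N) * ∑ p ∈ PY Y, ((∑ D ∈ GF ⌊X⌋₊, (if p ∣ D.natAbs then (1 : ℝ) else 0)) - N / (p + 1)) := by
    rw [Finset.sum_sub_distrib, mul_sub]
    congr 1
    rw [Finset.mul_sum]
    refine Finset.sum_congr rfl fun p _ => ?_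
    field_simp
  rw [hdiff, abs_mul, abs_of_pos (by positivity : 0 < 1 / N)]
  have hterm : ∀ p ∈ PY Y, |(∑ D ∈ GF ⌊X⌋₊, (if p ∣ D.natAbs then (1 : ℝ) else 0)) - N / (p + 1)| ≤
      2 * (K + 1) * √X * (1 / √p) := by
    intro p hpp
    rw [PY, Finset.mem_filter] at hpp
    have hp0 : (0 : ℝ) < p := by exact_mod_cast hpp.2.pos
    have hsp : 0 < √(p : ℝ) := Real.sqrt_pos.2 hp0
    have h1 := hp p hpp.2
    rw [Real.sqrt_div hX0.le] at h1
    have h2 : |a * X / (p + 1) - N / (p + 1)| ≤ (K + 1) * √X * (1 / √p) := by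
      rw [← sub_div, abs_div, abs_of_pos (by positivity : (0 : ℝ) < p + 1), abs_sub_comm, mul_one_div]
      have : √(p : ℝ) ≤ p + 1 := by
        rw [Real.sqrt_le_left (by positivity)]; nlinarith
      gcongr
    have h3 : K * (√X / √p) ≤ (K + 1) * √X * (1 / √p) := by
      rw [mul_one_div, mul_div_assoc]; gcongr; linarith
    have := abs_sub_le (∑ D ∈ GF ⌊X⌋₊, (if p ∣ D.natAbs then (1 : ℝ) else 0))
      (a * X / (p + 1)) (N / (p + 1))
    linarith
  have hS : |∑ p ∈ PY Y, ((∑ D ∈ GF ⌊X⌋₊, (if p ∣ D.natAbs then (1 : ℝ) else 0)) - N / (p + 1))| ≤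
      4 * (K + 1) * √X * √Y := by
    refine (Finset.abs_sum_le_sum_abs _ _).trans ((Finset.sum_le_sum hterm).trans ?_)
    rw [← Finset.mul_sum]
    have h1 : ∑ p ∈ PY Y, 1 / √(p : ℝ) ≤ 2 * √Y := by
      calc ∑ p ∈ PY Y, 1 / √(p : ℝ) ≤ ∑ n ∈ Finset.Ioc 0 ⌊Y⌋₊, (1 : ℝ) / √n :=
            Finset.sum_le_sum_of_subset_of_nonneg (Finset.filter_subset _ _)
              (fun _ _ _ => by positivity)
        _ ≤ 2 * √(⌊Y⌋₊ : ℝ) := sum_inv_sqrt _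
        _ ≤ 2 * √Y := by gcongr; exact Nat.floor_le hY0.le
    calc 2 * (K + 1) * √X * ∑ p ∈ PY Y, 1 / √(p : ℝ) ≤ 2 * (K + 1) * √X * (2 * √Y) := by gcongr
      _ = _ := by ring
  have hpow : X ^ (-(1 : ℝ) / 2) ≤ X ^ (-(1 : ℝ) / 2 + ε) :=
    Real.rpow_le_rpow_of_exponent_le (by linarith) (by linarith)
  have hXh : X ^ (-(1 : ℝ) / 2) = √X / X := by
    rw [Real.sqrt_eq_rpow, neg_div, Real.rpow_neg hX0.le, ← Real.sqrt_eq_rpow]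
    field_simp
    rw [sq, hsX]
  calc 1 / N * _ ≤ 1 / (b * X) * (4 * (K + 1) * √X * √Y) := by gcongr
    _ = 4 * (K + 1) / b * Y ^ ((1 : ℝ) / 2) * X ^ (-(1 : ℝ) / 2) := by
      rw [hXh, ← Real.sqrt_eq_rpow]; field_simp
    _ ≤ _ := by gcongr
end
end
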